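/- A BIBS system is ROS if and only if it admits an ROS-Lyapunov function. -/

import Mathlib

open MeasureTheory Set Filter Topology
open scoped ENNReal NNReal

noncomputable section

/-- A function of class `K`: continuous, strictly increasing on `[0,∞)` and vanishing at `0`. -/
def IsClassK (α : ℝ → ℝ) : Prop :=
  ContinuousOn α (Ici 0) ∧ StrictMonoOn α (Ici 0) ∧ α 0 = 0

/-- A function of class `K∞`: class `K` and unbounded. -/
def IsClassKInfty (α : ℝ → ℝ) : Prop :=
  IsClassK α ∧ Tendsto α atTop atTop

/-- A function of class `KL`. -/
def IsClassKL (β : ℝ → ℝ → ℝ) : Prop :=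
  (∀ t ∈ Ici (0:ℝ), IsClassK fun s => β s t) ∧
  ∀ s ∈ Ici (0:ℝ), AntitoneOn (fun t => β s t) (Ici 0) ∧
    Tendsto (fun t => β s t) atTop (𝓝 0)

/-- Admissible inputs: measurable and locally essentially bounded on `[0,∞)`. -/
def IsInput {m : ℕ} (u : ℝ → EuclideanSpace ℝ (Fin m)) : Prop :=
  Measurable u ∧ ∀ T > (0:ℝ), ∃ C : ℝ, ∀ᵐ t ∂(volume.restrict (Icc 0 T)), ‖u t‖ ≤ C

/-- The essential supremum norm of an input over `[0,∞)`, as an extended nonnegative real. -/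
def uNormE {m : ℕ} (u : ℝ → EuclideanSpace ℝ (Fin m)) : ℝ≥0∞ :=
  essSup (fun t => (‖u t‖₊ : ℝ≥0∞)) (volume.restrict (Ici 0))

/-- An input which is (globally) essentially bounded on `[0,∞)`. -/
def BddInput {m : ℕ} (u : ℝ → EuclideanSpace ℝ (Fin m)) : Prop := uNormE u ≠ ⊤

/-- The essential supremum norm `‖u‖` of an input, as a real number. -/
def uNorm {m : ℕ} (u : ℝ → EuclideanSpace ℝ (Fin m)) : ℝ := (uNormE u).toReal

/-- `x` is the solution map of the forward-complete system `ẋ = f(x,u)`: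
for every initial state `ξ` and admissible input `u`, `t ↦ x t ξ u` solves the corresponding
integral equation on all of `[0,∞)`. -/
def IsSolutionMap {n m : ℕ}
    (f : EuclideanSpace ℝ (Fin n) → EuclideanSpace ℝ (Fin m) → EuclideanSpace ℝ (Fin n))
    (x : ℝ → EuclideanSpace ℝ (Fin n) → (ℝ → EuclideanSpace ℝ (Fin m)) →
      EuclideanSpace ℝ (Fin n)) : Prop :=
  ∀ ξ u, IsInput u → ∀ t ∈ Ici (0:ℝ),
    x t ξ u = ξ + ∫ s in (0:ℝ)..t, f (x s ξ u) (u s)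

/-- The system is bounded-input bounded-state (BIBS): it is forward complete (encoded by the
solution-map property) and trajectories are bounded in terms of a class-`K` function of the
initial state and of the input norm. -/
def IsBIBS {n m : ℕ}
    (f : EuclideanSpace ℝ (Fin n) → EuclideanSpace ℝ (Fin m) → EuclideanSpace ℝ (Fin n))
    (x : ℝ → EuclideanSpace ℝ (Fin n) → (ℝ → EuclideanSpace ℝ (Fin m)) →
      EuclideanSpace ℝ (Fin n)) : Prop :=
  IsSolutionMap f x ∧ ∃ σ : ℝ → ℝ, IsClassK σ ∧ ∀ ξ u, IsInput u → BddInput u →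
    ∀ t ∈ Ici (0:ℝ), ‖x t ξ u‖ ≤ max (σ ‖ξ‖) (σ (uNorm u))

/-- Input-to-output stability (IOS). -/
def IsIOS {n m p : ℕ}
    (h : EuclideanSpace ℝ (Fin n) → EuclideanSpace ℝ (Fin p))
    (x : ℝ → EuclideanSpace ℝ (Fin n) → (ℝ → EuclideanSpace ℝ (Fin m)) →
      EuclideanSpace ℝ (Fin n)) : Prop :=
  ∃ β γ, IsClassKL β ∧ IsClassK γ ∧ ∀ ξ u, IsInput u → BddInput u →
    ∀ t ∈ Ici (0:ℝ), ‖h (x t ξ u)‖ ≤ max (β ‖ξ‖ t) (γ (uNorm u))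

/-- An admissible disturbance: a measurable function essentially bounded by `1` on `[0,∞)`. -/
def IsDisturbance {m : ℕ} (d : ℝ → EuclideanSpace ℝ (Fin m)) : Prop :=
  Measurable d ∧ ∀ᵐ t ∂(volume.restrict (Ici (0:ℝ))), ‖d t‖ ≤ 1

/-- `z` solves the closed-loop system `ẋ = g(x,d) := f(x, d·λ(|h(x)|))` on `[0,∞)` with
initial state `ξ` and disturbance `d`. -/
def SolvesClosedLoop {n m p : ℕ}
    (f : EuclideanSpace ℝ (Fin n) → EuclideanSpace ℝ (Fin m) → EuclideanSpace ℝ (Fin n))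
    (h : EuclideanSpace ℝ (Fin n) → EuclideanSpace ℝ (Fin p))
    (lam : ℝ → ℝ) (ξ : EuclideanSpace ℝ (Fin n))
    (d : ℝ → EuclideanSpace ℝ (Fin m)) (z : ℝ → EuclideanSpace ℝ (Fin n)) : Prop :=
  ∀ t ∈ Ici (0:ℝ), z t = ξ + ∫ s in (0:ℝ)..t, f (z s) (lam ‖h (z s)‖ • d s)

/-- Robust output stability (ROS): there are a class-`K∞` function `λ`, smooth on `(0,∞)`,
and a class-`KL` function `β` such that the closed-loop system `ẋ = f(x, d·λ(|h(x)|))` is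
forward complete and all of its outputs satisfy `|y_λ(t,ξ,d)| ≤ β(|ξ|,t)`. -/
def IsROS {n m p : ℕ}
    (f : EuclideanSpace ℝ (Fin n) → EuclideanSpace ℝ (Fin m) → EuclideanSpace ℝ (Fin n))
    (h : EuclideanSpace ℝ (Fin n) → EuclideanSpace ℝ (Fin p)) : Prop :=
  ∃ lam β : _, IsClassKInfty lam ∧ ContDiffOn ℝ (⊤:ℕ∞) lam (Ioi 0) ∧ IsClassKL β ∧
    (∀ ξ d, IsDisturbance d → ∃ z : ℝ → EuclideanSpace ℝ (Fin n),
      SolvesClosedLoop f h lam ξ d z) ∧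
    (∀ ξ d z, IsDisturbance d → SolvesClosedLoop f h lam ξ d z →
      ∀ t ∈ Ici (0:ℝ), ‖h (z t)‖ ≤ β ‖ξ‖ t)

/-- An ROS-Lyapunov function for the system `ẋ = f(x,u)`, `y = h(x)`. -/
def IsROSLyapunov {n m p : ℕ}
    (f : EuclideanSpace ℝ (Fin n) → EuclideanSpace ℝ (Fin m) → EuclideanSpace ℝ (Fin n))
    (h : EuclideanSpace ℝ (Fin n) → EuclideanSpace ℝ (Fin p))
    (V : EuclideanSpace ℝ (Fin n) → ℝ) : Prop :=
  ContDiff ℝ (⊤:ℕ∞) V ∧ (∀ ξ, 0 ≤ V ξ) ∧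
  (∃ α₁ α₂ : ℝ → ℝ, IsClassKInfty α₁ ∧ IsClassKInfty α₂ ∧
    ∀ ξ, α₁ ‖h ξ‖ ≤ V ξ ∧ V ξ ≤ α₂ ‖ξ‖) ∧
  ∃ χ : ℝ → ℝ, IsClassK χ ∧ ∃ α₃ : ℝ → ℝ → ℝ,
    (∀ r ∈ Ici (0:ℝ), IsClassK fun s => α₃ s r) ∧
    (∀ s ∈ Ici (0:ℝ), AntitoneOn (fun r => α₃ s r) (Ici 0)) ∧
    ∀ ξ μ, χ ‖μ‖ ≤ ‖h ξ‖ → fderiv ℝ V ξ (f ξ μ) ≤ -α₃ (V ξ) ‖ξ‖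

/-!
Sufficiency. Along the closed loop with feedback gain `λ` chosen from `χ`, an ROS-Lyapunov function
`V` satisfies `d/dt V ≤ -α₃ (V, ‖x‖)`. The bounded-input bounded-state property confines each
trajectory to a ball depending only on its initial state, so `V`, and with it the output, decays
uniformly on bounded sets of initial states; such uniform attractivity yields a class `KL` estimate.

Necessity. For `ε > 0` the value function `sup {e ^ t * (‖y(t)‖ - ε)⁺}`, over all trajectories of
the closed loop starting at `ξ` and all `t ≥ 0`, decays exponentially along the closed loop. The
output estimate makes it a supremum over a bounded time interval, hence it is locally Lipschitz, and
mollification with a slowly varying radius makes it smooth at the cost of a small error. That error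
is harmless above the level `ε`; composing with a smooth ramp that vanishes below this level, and
summing over `ε = 1, 1/2, 1/3, …` with rapidly decreasing weights, produces a smooth function which
decreases wherever it is positive.
-/

/-! ### Mollification -/

section Mollifier

variable {E : Type*} [NormedAddCommGroup E] [NormedSpace ℝ E] [FiniteDimensional ℝ E]
  [MeasurableSpace E]

/-- A fixed smooth probability density with respect to `μ`, supported in the closed unit ball. -/
def mollifier (μ : Measure E) : E → ℝ :=
  (⟨1 / 2, 1, by norm_num, by norm_num⟩ : ContDiffBump (0 : E)).normed μ

theorem contDiff_mollifier {μ : Measure E} : ContDiff ℝ (⊤ : ℕ∞) (mollifier μ) :=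
  ContDiffBump.contDiff_normed _

theorem mollifier_nonneg {μ : Measure E} (η : E) : 0 ≤ mollifier μ η :=
  ContDiffBump.nonneg_normed _ η

variable [BorelSpace E] {μ : Measure E} [μ.IsAddHaarMeasure]

theorem support_mollifier : Function.support (mollifier μ) = Metric.ball 0 1 :=
  ContDiffBump.support_normed_eq _

theorem mollifier_eq_zero {η : E} (hη : 1 ≤ ‖η‖) : mollifier μ η = 0 := by
  rw [← Function.notMem_support, support_mollifier, mem_ball_zero_iff]
  exact hη.not_gt

theorem hasCompactSupport_mollifier : HasCompactSupport (mollifier μ) :=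
  ContDiffBump.hasCompactSupport_normed _

theorem integral_mollifier : ∫ η, mollifier μ η ∂μ = 1 :=
  ContDiffBump.integral_normed _

theorem integral_mollifier_mul_const (r : ℝ) : ∫ η, mollifier μ η * r ∂μ = r := by
  rw [integral_mul_const, integral_mollifier, one_mul]

theorem integrable_mollifier_mul {u : E → ℝ} (hu : Continuous u) :
    Integrable (fun η => mollifier μ η * u η) μ :=
  (contDiff_mollifier.continuous.mul hu).integrable_of_hasCompactSupport
    hasCompactSupport_mollifier.mul_right

theorem mollifier_mul_le_mollifier_mul {u v : E → ℝ} (h : ∀ η, ‖η‖ < 1 → u η ≤ v η) (η : E) :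
    mollifier μ η * u η ≤ mollifier μ η * v η := by
  rcases lt_or_ge ‖η‖ 1 with hη | hη
  · exact mul_le_mul_of_nonneg_left (h η hη) (mollifier_nonneg η)
  · simp only [mollifier_eq_zero hη, zero_mul, le_refl]

theorem integral_mollifier_mul_mono {u v : E → ℝ} (hu : Continuous u) (hv : Continuous v)
    (h : ∀ η, ‖η‖ < 1 → u η ≤ v η) :
    ∫ η, mollifier μ η * u η ∂μ ≤ ∫ η, mollifier μ η * v η ∂μ :=
  integral_mono (integrable_mollifier_mul hu) (integrable_mollifier_mul hv)
    (mollifier_mul_le_mollifier_mul h)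

theorem integral_mollifier_mul_le {u : E → ℝ} (hu : Continuous u) {r : ℝ}
    (h : ∀ η, ‖η‖ < 1 → u η ≤ r) : ∫ η, mollifier μ η * u η ∂μ ≤ r :=
  (integral_mollifier_mul_mono hu continuous_const h).trans_eq (integral_mollifier_mul_const r)

theorem le_integral_mollifier_mul {u : E → ℝ} (hu : Continuous u) {r : ℝ}
    (h : ∀ η, ‖η‖ < 1 → r ≤ u η) : r ≤ ∫ η, mollifier μ η * u η ∂μ :=
  (integral_mollifier_mul_const r).symm.trans_le
    (integral_mollifier_mul_mono continuous_const hu h)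

theorem integral_mollifier_mul_lt {u v : E → ℝ} (hu : Continuous u) (hv : Continuous v)
    (h : ∀ η, u η < v η) :
    ∫ η, mollifier μ η * u η ∂μ < ∫ η, mollifier μ η * v η ∂μ := by
  have h0 : mollifier μ (0 : E) ≠ 0 := by
    rw [← Function.mem_support, support_mollifier]
    exact Metric.mem_ball_self one_pos
  have hpos : 0 < ∫ η, mollifier μ η * (v η - u η) ∂μ :=
    Continuous.integral_pos_of_hasCompactSupport_nonneg_nonzero (x := 0)
      (contDiff_mollifier.continuous.mul (hv.sub hu)) hasCompactSupport_mollifier.mul_right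
      (fun η => mul_nonneg (mollifier_nonneg η) (sub_pos.2 (h η)).le)
      (mul_ne_zero h0 (sub_pos.2 (h 0)).ne')
  simp only [mul_sub] at hpos
  rwa [integral_sub (integrable_mollifier_mul hv) (integrable_mollifier_mul hu), sub_pos] at hpos

end Mollifier

/-! ### Comparison functions -/

section Comparison

theorem IsClassK.monotoneOn {α : ℝ → ℝ} (hα : IsClassK α) : MonotoneOn α (Ici 0) :=
  hα.2.1.monotoneOn

theorem IsClassK.mono {α : ℝ → ℝ} (hα : IsClassK α) {s t : ℝ} (hs : 0 ≤ s) (hst : s ≤ t) :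
    α s ≤ α t :=
  hα.monotoneOn hs (hs.trans hst) hst

theorem IsClassK.nonneg {α : ℝ → ℝ} (hα : IsClassK α) {s : ℝ} (hs : 0 ≤ s) : 0 ≤ α s :=
  hα.2.2.symm.trans_le (hα.mono le_rfl hs)

theorem IsClassK.pos {α : ℝ → ℝ} (hα : IsClassK α) {s : ℝ} (hs : 0 < s) : 0 < α s :=
  hα.2.2.symm.trans_lt (hα.2.1 self_mem_Ici hs.le hs)

theorem IsClassK.comp {α γ : ℝ → ℝ} (hα : IsClassK α) (hγ : IsClassK γ) :
    IsClassK (α ∘ γ) :=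
  have hmaps : MapsTo γ (Ici 0) (Ici 0) := fun _ => hγ.nonneg
  ⟨hα.1.comp hγ.1 hmaps, hα.2.1.comp hγ.2.1 hmaps, by
    rw [Function.comp_apply, hγ.2.2, hα.2.2]⟩

theorem IsClassK.max {α γ : ℝ → ℝ} (hα : IsClassK α) (hγ : IsClassK γ) :
    IsClassK fun s => max (α s) (γ s) :=
  ⟨hα.1.sup hγ.1, fun _ hs _ ht hst => max_lt_max (hα.2.1 hs ht hst) (hγ.2.1 hs ht hst), by
    simp only [hα.2.2, hγ.2.2, max_self]⟩

theorem isClassKInfty_add_id {M : ℝ → ℝ} (hc : ContinuousOn M (Ici 0))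
    (hm : MonotoneOn M (Ici 0)) (h0 : M 0 = 0) : IsClassKInfty fun s => M s + s := by
  refine ⟨⟨hc.add continuousOn_id, fun s hs t ht hst => ?_, by simp only [h0, add_zero]⟩, ?_⟩
  · exact add_lt_add_of_le_of_lt (hm hs ht hst.le) hst
  · refine tendsto_atTop_mono' _ ?_ tendsto_id
    filter_upwards [eventually_ge_atTop 0] with s hs
    have : M 0 ≤ M s := hm self_mem_Ici hs hs
    simp only [id]
    linarith

theorem IsClassKInfty.of_orderIso {e : ℝ ≃o ℝ} (h0 : e 0 = 0) : IsClassKInfty e :=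
  ⟨⟨e.continuous.continuousOn, e.strictMono.strictMonoOn _, h0⟩, e.tendsto_atTop⟩

theorem IsClassKInfty.exists_orderIso {α : ℝ → ℝ} (hα : IsClassKInfty α) :
    ∃ e : ℝ ≃o ℝ, e 0 = 0 ∧ EqOn e α (Ici 0) := by
  obtain ⟨hK, htop⟩ := hα
  set g : ℝ → ℝ := fun s => α (max s 0) + min s 0 with hg
  have hpos : EqOn g α (Ici 0) := fun s hs => by
    simp only [hg, max_eq_left (mem_Ici.1 hs), min_eq_right (mem_Ici.1 hs), add_zero]
  have hneg : ∀ s ≤ 0, g s = s := fun s hs => by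
    simp only [hg, max_eq_right hs, min_eq_left hs, hK.2.2, zero_add]
  have hcont : Continuous g :=
    (hK.1.comp_continuous (by fun_prop) fun s => le_max_right s 0).add (by fun_prop)
  have hmono : StrictMono g := by
    have hIic : StrictMonoOn g (Iic 0) :=
      strictMonoOn_id.congr fun s hs => (hneg s hs).symm
    exact hIic.Iic_union_Ici (hK.2.1.congr hpos.symm)
  have hattop : Tendsto g atTop atTop :=
    htop.congr' ((eventually_ge_atTop 0).mono fun s hs => (hpos hs).symm)
  have hatbot : Tendsto g atBot atBot :=
    tendsto_id.congr' ((eventually_le_atBot 0).mono fun s hs => (hneg s hs).symm)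
  exact ⟨hmono.orderIsoOfSurjective g (hcont.surjective hattop hatbot), hneg 0 le_rfl, hpos⟩

/- The inverse of `α⁻¹ + id` is `1`-Lipschitz, because `α⁻¹ + id` is expanding. -/
theorem IsClassKInfty.exists_orderIso_lipschitzWith_le {α : ℝ → ℝ} (hα : IsClassKInfty α) :
    ∃ e : ℝ ≃o ℝ, e 0 = 0 ∧ LipschitzWith 1 e ∧ ∀ s, 0 ≤ s → e s ≤ α s := by
  obtain ⟨a, ha0, ha⟩ := hα.exists_orderIso
  set g : ℝ → ℝ := fun s => a.symm s + s
  have hmono : StrictMono g := a.symm.strictMono.add strictMono_id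
  have hsurj : Function.Surjective g :=
    (a.symm.continuous.add continuous_id).surjective
      (a.symm.tendsto_atTop.atTop_add_atTop tendsto_id)
      (a.symm.tendsto_atBot.atBot_add_atBot tendsto_id)
  set e : ℝ ≃o ℝ := (hmono.orderIsoOfSurjective g hsurj).symm
  have hge : ∀ s, a.symm (e s) + e s = s :=
    (hmono.orderIsoOfSurjective g hsurj).apply_symm_apply
  have he0 : e 0 = 0 := by
    refine ((hmono.orderIsoOfSurjective g hsurj).symm_apply_eq).2 ?_
    change 0 = a.symm 0 + 0
    rw [add_zero, a.symm_apply_eq.2 ha0.symm]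
  refine ⟨e, he0, LipschitzWith.of_le_add fun s t => ?_, fun s hs => ?_⟩
  · rcases le_total s t with hst | hts
    · exact (e.monotone hst).trans (le_add_of_nonneg_right dist_nonneg)
    · have := a.symm.monotone (e.monotone hts)
      rw [Real.dist_eq, abs_of_nonneg (sub_nonneg.2 hts)]
      linarith [hge s, hge t]
  · have hes : 0 ≤ e s := he0.symm.trans_le (e.monotone hs)
    rw [← ha hs, ← a.symm_apply_le]
    linarith [hge s]

/-- The smoothing of `b` on the logarithmic scale, which preserves the value at `0` and is smooth
on `(0,∞)`. -/
def expMollify (b : ℝ → ℝ) (s : ℝ) : ℝ :=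
  ∫ t, mollifier volume t * b (s * Real.exp (-1 - t))

theorem expMollify_zero (b : ℝ → ℝ) : expMollify b 0 = b 0 := by
  simp only [expMollify, zero_mul, integral_mollifier_mul_const]

theorem exp_mem_Icc_of_norm_lt_one {t : ℝ} (ht : ‖t‖ < 1) :
    Real.exp (-1 - t) ∈ Icc (Real.exp (-2)) 1 := by
  rw [Real.norm_eq_abs, abs_lt] at ht
  exact ⟨Real.exp_le_exp.2 (by linarith), Real.exp_le_one_iff.2 (by linarith)⟩

theorem expMollify_le {b : ℝ → ℝ} (hc : Continuous b) (hm : Monotone b) {s : ℝ} (hs : 0 ≤ s) :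
    expMollify b s ≤ b s :=
  integral_mollifier_mul_le (by fun_prop) fun _ ht =>
    hm (mul_le_of_le_one_right hs (exp_mem_Icc_of_norm_lt_one ht).2)

theorem le_expMollify {b : ℝ → ℝ} (hc : Continuous b) (hm : Monotone b) {s : ℝ} (hs : 0 ≤ s) :
    b (s * Real.exp (-2)) ≤ expMollify b s :=
  le_integral_mollifier_mul (by fun_prop) fun _ ht =>
    hm (mul_le_mul_of_nonneg_left (exp_mem_Icc_of_norm_lt_one ht).1 hs)

theorem strictMono_expMollify {b : ℝ → ℝ} (hc : Continuous b) (hm : StrictMono b) :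
    StrictMono (expMollify b) := fun _ _ hsr =>
  integral_mollifier_mul_lt (by fun_prop) (by fun_prop) fun _ =>
    hm (mul_lt_mul_of_pos_right hsr (Real.exp_pos _))

theorem lipschitzWith_expMollify {b : ℝ → ℝ} (hb : LipschitzWith 1 b) :
    LipschitzWith 1 (expMollify b) := by
  have hc := hb.continuous
  refine LipschitzWith.of_le_add fun s r => ?_
  rw [← integral_mollifier_mul_const (μ := (volume : Measure ℝ)) (dist s r), expMollify, expMollify,
    ← integral_add (integrable_mollifier_mul (by fun_prop))
      (integrable_mollifier_mul continuous_const)]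
  simp only [← mul_add]
  refine integral_mollifier_mul_mono (by fun_prop) (by fun_prop) fun t ht => ?_
  have hdist : dist (s * Real.exp (-1 - t)) (r * Real.exp (-1 - t)) ≤ dist s r := by
    rw [Real.dist_eq, Real.dist_eq, ← sub_mul, abs_mul, abs_of_pos (Real.exp_pos _)]
    exact mul_le_of_le_one_right (abs_nonneg _) (exp_mem_Icc_of_norm_lt_one ht).2
  have := (le_abs_self _).trans ((hb.dist_le_mul (s * Real.exp (-1 - t)) (r * Real.exp (-1 - t))))
  rw [NNReal.coe_one, one_mul] at this
  linarith

theorem contDiffOn_expMollify {b : ℝ → ℝ} (hc : Continuous b) :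
    ContDiffOn ℝ (⊤ : ℕ∞) (expMollify b) (Ioi 0) := by
  have hconv : ContDiff ℝ (⊤ : ℕ∞) (convolution (mollifier volume)
      (fun y => b (Real.exp (y - 1))) (ContinuousLinearMap.mul ℝ ℝ) volume) :=
    hasCompactSupport_mollifier.contDiff_convolution_left _ contDiff_mollifier
      (Continuous.locallyIntegrable (by fun_prop))
  refine (hconv.comp_contDiffOn (Real.contDiffOn_log.mono fun s hs => ne_of_gt hs)).congr
    fun s hs => ?_
  simp only [Function.comp_apply, convolution_def, ContinuousLinearMap.mul_apply', expMollify]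
  refine integral_congr_ae (Eventually.of_forall fun t => ?_)
  simp only
  rw [show Real.log s - t - 1 = Real.log s + (-1 - t) by ring, Real.exp_add, Real.exp_log hs]

theorem IsClassKInfty.exists_contDiffOn_lipschitzWith_le {α : ℝ → ℝ} (hα : IsClassKInfty α) :
    ∃ l : ℝ → ℝ, IsClassKInfty l ∧ ContDiffOn ℝ (⊤ : ℕ∞) l (Ioi 0) ∧ LipschitzWith 1 l ∧
      ∀ s, 0 ≤ s → l s ≤ α s := by
  obtain ⟨b, hb0, hblip, hbα⟩ := hα.exists_orderIso_lipschitzWith_le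
  have hc := b.continuous
  have htop : Tendsto (expMollify b) atTop atTop := by
    refine tendsto_atTop_mono' _ ?_
      (b.tendsto_atTop.comp (tendsto_id.atTop_mul_const (Real.exp_pos (-2))))
    filter_upwards [eventually_ge_atTop 0] with s hs using le_expMollify hc b.monotone hs
  exact ⟨expMollify b,
    ⟨⟨(lipschitzWith_expMollify hblip).continuous.continuousOn,
      (strictMono_expMollify hc b.strictMono).strictMonoOn _, (expMollify_zero b).trans hb0⟩, htop⟩,
    contDiffOn_expMollify hc, lipschitzWith_expMollify hblip,
    fun s hs => (expMollify_le hc b.monotone hs).trans (hbα s hs)⟩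

/-- The average of `M` over `[s, 2s]`. It regularises a monotone function from above. -/
def dilationAverage (M : ℝ → ℝ) (s : ℝ) : ℝ := ∫ v in (1 : ℝ)..2, M (s * v)

theorem dilationAverage_zero (M : ℝ → ℝ) : dilationAverage M 0 = M 0 := by
  simp only [dilationAverage, zero_mul, intervalIntegral.integral_const, smul_eq_mul]
  ring

theorem dilationAverage_const (r s : ℝ) : dilationAverage (fun _ => r) s = r := by
  simp only [dilationAverage, intervalIntegral.integral_const, smul_eq_mul]
  ring

theorem dilationAverage_le_dilationAverage {M N : ℝ → ℝ} (hM : Monotone M) (hN : Monotone N)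
    {s r : ℝ} (hs : 0 ≤ s) (hr : 0 ≤ r) (h : ∀ v ∈ Icc (1 : ℝ) 2, M (s * v) ≤ N (r * v)) :
    dilationAverage M s ≤ dilationAverage N r := by
  have hint {L : ℝ → ℝ} (hL : Monotone L) {a : ℝ} (ha : 0 ≤ a) :
      IntervalIntegrable (fun v => L (a * v)) volume 1 2 :=
    (hL.comp (monotone_id.const_mul ha)).intervalIntegrable
  exact intervalIntegral.integral_mono_on one_le_two (hint hM hs) (hint hN hr) h

theorem le_dilationAverage {M : ℝ → ℝ} (hM : Monotone M) {s : ℝ} (hs : 0 ≤ s) :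
    M s ≤ dilationAverage M s :=
  (dilationAverage_const (M s) s).symm.trans_le <|
    dilationAverage_le_dilationAverage monotone_const hM hs hs fun _ hv =>
      hM (le_mul_of_one_le_right hs hv.1)

theorem dilationAverage_le {M : ℝ → ℝ} (hM : Monotone M) {s : ℝ} (hs : 0 ≤ s) :
    dilationAverage M s ≤ M (s * 2) :=
  (dilationAverage_le_dilationAverage hM monotone_const hs hs fun _ hv =>
    hM (mul_le_mul_of_nonneg_left hv.2 hs)).trans_eq (dilationAverage_const (M (s * 2)) s)

theorem monotoneOn_dilationAverage {M : ℝ → ℝ} (hM : Monotone M) :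
    MonotoneOn (dilationAverage M) (Ici 0) := fun _ hs _ hr hsr =>
  dilationAverage_le_dilationAverage hM hM hs hr fun _ hv =>
    hM (mul_le_mul_of_nonneg_right hsr (zero_le_one.trans hv.1))

theorem continuousAt_dilationAverage {M : ℝ → ℝ} (hM : Monotone M) {s : ℝ} (hs : 0 < s) :
    ContinuousAt (dilationAverage M) s := by
  have hprim : Continuous fun x => ∫ v in (0 : ℝ)..x, M v :=
    intervalIntegral.continuous_primitive (fun _ _ => hM.intervalIntegrable) 0
  have heq : (fun s => s⁻¹ * ((∫ v in (0 : ℝ)..(s * 2), M v) - ∫ v in (0 : ℝ)..s, M v))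
      =ᶠ[𝓝 s] dilationAverage M := by
    filter_upwards [lt_mem_nhds hs] with r hr
    rw [dilationAverage, intervalIntegral.integral_comp_mul_left M hr.ne', smul_eq_mul, mul_one,
      intervalIntegral.integral_interval_sub_left hM.intervalIntegrable hM.intervalIntegrable]
  refine ContinuousAt.congr ((continuousAt_inv₀ hs.ne').mul ?_) heq
  exact ((hprim.comp (continuous_mul_const 2)).sub hprim).continuousAt

theorem continuousOn_dilationAverage {M : ℝ → ℝ} (hM : Monotone M)
    (h0 : ContinuousWithinAt M (Ici 0) 0) : ContinuousOn (dilationAverage M) (Ici 0) := by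
  intro s hs
  rcases (mem_Ici.1 hs).eq_or_lt with rfl | hpos
  · have hdouble : Tendsto (fun s : ℝ => M (s * 2)) (𝓝[≥] 0) (𝓝 (M 0)) := by
      have hmul : ContinuousWithinAt (fun s : ℝ => s * 2) (Ici 0) 0 := by fun_prop
      have hM2 : ContinuousWithinAt M (Ici 0) (0 * 2) := by rwa [zero_mul]
      simpa only [ContinuousWithinAt, Function.comp_def, zero_mul] using
        hM2.comp (f := fun s : ℝ => s * 2) hmul fun s hs => mul_nonneg (mem_Ici.1 hs) two_pos.le
    rw [ContinuousWithinAt, dilationAverage_zero]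
    refine tendsto_of_tendsto_of_tendsto_of_le_of_le' h0 hdouble ?_ ?_ <;>
      filter_upwards [self_mem_nhdsWithin] with s hs
    · exact le_dilationAverage hM hs
    · exact dilationAverage_le hM hs
  · exact (continuousAt_dilationAverage hM hpos).continuousWithinAt

theorem exists_isClassKL_ge {ψ : ℝ → ℝ → ℝ} (hmono : ∀ t, Monotone fun s => ψ s t)
    (hanti : ∀ s, Antitone (ψ s)) (h0 : ∀ t, ψ 0 t = 0)
    (hcont : ∀ t, ContinuousWithinAt (fun s => ψ s t) (Ici 0) 0)
    (hlim : ∀ s, Tendsto (ψ s) atTop (𝓝 0)) :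
    ∃ β, IsClassKL β ∧ ∀ s t, 0 ≤ s → ψ s t ≤ β s t := by
  refine ⟨fun s t => dilationAverage (fun r => ψ r t) s + s * Real.exp (-t),
    ⟨fun t _ => ⟨?_, ?_, ?_⟩, fun s hs => ⟨?_, ?_⟩⟩, fun s t hs => ?_⟩
  · exact (continuousOn_dilationAverage (hmono t) (hcont t)).add
      (continuousOn_id.mul continuousOn_const)
  · exact fun a ha b hb hab =>
      add_lt_add_of_le_of_lt (monotoneOn_dilationAverage (hmono t) ha hb hab.le)
        (mul_lt_mul_of_pos_right hab (Real.exp_pos _))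
  · simp only [dilationAverage_zero, h0, zero_mul, add_zero]
  · intro t _ r _ htr
    refine add_le_add (dilationAverage_le_dilationAverage (hmono r) (hmono t) hs hs
      fun v _ => hanti _ htr) (mul_le_mul_of_nonneg_left (Real.exp_le_exp.2 (by linarith)) hs)
  · have hexp : Tendsto (fun t => s * Real.exp (-t)) atTop (𝓝 (s * 0)) :=
      Real.tendsto_exp_neg_atTop_nhds_zero.const_mul s
    have havg : Tendsto (fun t => dilationAverage (fun r => ψ r t) s) atTop (𝓝 0) :=
      tendsto_of_tendsto_of_tendsto_of_le_of_le (hlim s) (hlim (s * 2))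
        (fun t => le_dilationAverage (hmono t) hs) fun t => dilationAverage_le (hmono t) hs
    simpa only [mul_zero, add_zero] using havg.add hexp
  · exact (le_dilationAverage (hmono t) hs).trans
      (le_add_of_nonneg_right (mul_nonneg hs (Real.exp_pos _).le))

/-- The worst value of the observation `y` among the samples `i` of size `s i ≤ r` taken at a time
`t i ≥ τ`. -/
def tailSup {ι : Type*} (s t y : ι → ℝ) (r τ : ℝ) : ℝ :=
  sSup (y '' {i | s i ≤ r ∧ τ ≤ t i})

section TailSup

variable {ι : Type*} {s t y : ι → ℝ} {b : ℝ → ℝ}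

theorem tailSup_nonneg (hy : ∀ i, 0 ≤ y i) (r τ : ℝ) : 0 ≤ tailSup s t y r τ :=
  Real.sSup_nonneg (forall_mem_image.2 fun i _ => hy i)

theorem tailSup_le {r τ c : ℝ} (hc : 0 ≤ c) (h : ∀ i, s i ≤ r → τ ≤ t i → y i ≤ c) :
    tailSup s t y r τ ≤ c :=
  Real.sSup_le (forall_mem_image.2 fun i hi => h i hi.1 hi.2) hc

theorem le_tailSup (hb : IsClassK b) (hs : ∀ i, 0 ≤ s i) (hyb : ∀ i, y i ≤ b (s i)) {r τ : ℝ}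
    {i : ι} (hi : s i ≤ r) (hτ : τ ≤ t i) : y i ≤ tailSup s t y r τ :=
  le_csSup ⟨b r, forall_mem_image.2 fun j hj => (hyb j).trans (hb.mono (hs j) hj.1)⟩
    (mem_image_of_mem y ⟨hi, hτ⟩)

theorem exists_isClassKL_of_uniformlyAttractive (hb : IsClassK b) (hs : ∀ i, 0 ≤ s i)
    (hy : ∀ i, 0 ≤ y i) (hyb : ∀ i, y i ≤ b (s i))
    (hattr : ∀ r, ∀ ε > 0, ∃ τ, ∀ i, s i ≤ r → τ ≤ t i → y i ≤ ε) :
    ∃ β, IsClassKL β ∧ ∀ i, y i ≤ β (s i) (t i) := by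
  have hle_b {r : ℝ} (hr : 0 ≤ r) (τ : ℝ) : tailSup s t y r τ ≤ b r :=
    tailSup_le (hb.nonneg hr) fun i hi _ => (hyb i).trans (hb.mono (hs i) hi)
  have hzero (τ : ℝ) : tailSup s t y 0 τ = 0 :=
    le_antisymm ((hle_b le_rfl τ).trans_eq hb.2.2) (tailSup_nonneg hy 0 τ)
  obtain ⟨β, hβ, hle⟩ := exists_isClassKL_ge (ψ := tailSup s t y)
    (fun τ r r' hr => tailSup_le (tailSup_nonneg hy r' τ) fun i hi hτ =>
      le_tailSup hb hs hyb (hi.trans hr) hτ)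
    (fun r τ τ' hτ => tailSup_le (tailSup_nonneg hy r τ) fun i hi hτi =>
      le_tailSup hb hs hyb hi (hτ.trans hτi))
    hzero
    (fun τ => by
      have hb0 : Tendsto b (𝓝[≥] 0) (𝓝 0) := by
        simpa only [ContinuousWithinAt, hb.2.2] using hb.1 0 self_mem_Ici
      rw [ContinuousWithinAt, hzero]
      exact squeeze_zero' (Eventually.of_forall fun r => tailSup_nonneg hy r τ)
        (eventually_mem_nhdsWithin.mono fun r hr => hle_b hr τ) hb0)
    (fun r => by
      refine Metric.tendsto_atTop.2 fun ε hε => ?_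
      obtain ⟨τ, hτ⟩ := hattr r (ε / 2) (half_pos hε)
      refine ⟨τ, fun τ' hτ' => ?_⟩
      rw [Real.dist_0_eq_abs, abs_of_nonneg (tailSup_nonneg hy r τ')]
      exact (tailSup_le (half_pos hε).le fun i hi hτi => hτ i hi (hτ'.trans hτi)).trans_lt
        (half_lt_self hε))
  exact ⟨β, hβ, fun i => (le_tailSup hb hs hyb le_rfl le_rfl).trans (hle (s i) (t i) (hs i))⟩

end TailSup

theorem exists_isClassKInfty_ge_of_continuous {E : Type*} [NormedAddCommGroup E]
    [NormedSpace ℝ E] [ProperSpace E] {V : E → ℝ} (hV : Continuous V) (hV0 : V 0 = 0) :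
    ∃ α, IsClassKInfty α ∧ ∀ ξ, V ξ ≤ α ‖ξ‖ := by
  set M : ℝ → ℝ := fun s => sSup ((fun ξ : E => V (s • ξ)) '' Metric.closedBall 0 1)
  have hball : IsCompact (Metric.closedBall (0 : E) 1) := isCompact_closedBall 0 1
  have hle (s : ℝ) {ξ : E} (hξ : ‖ξ‖ ≤ 1) : V (s • ξ) ≤ M s :=
    le_csSup (hball.bddAbove_image (Continuous.continuousOn (by fun_prop)))
      (mem_image_of_mem _ (mem_closedBall_zero_iff.2 hξ))
  have hM_le {s r : ℝ} (h : ∀ ξ : E, ‖ξ‖ ≤ 1 → V (s • ξ) ≤ r) : M s ≤ r :=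
    csSup_le ((Metric.nonempty_closedBall.2 zero_le_one).image _)
      (forall_mem_image.2 fun ξ hξ => h ξ (mem_closedBall_zero_iff.1 hξ))
  have hcont : Continuous M := hball.continuous_sSup (by fun_prop)
  have hmono : MonotoneOn M (Ici 0) := fun s hs r hr hsr => hM_le fun ξ hξ => by
    rcases (mem_Ici.1 hr).eq_or_lt with rfl | hpos
    · rw [le_antisymm hsr hs]
      exact hle 0 hξ
    · have hsξ : s • ξ = r • (s / r) • ξ := by rw [smul_smul, mul_div_cancel₀ _ hpos.ne']
      rw [hsξ]
      refine hle r ?_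
      rw [norm_smul, Real.norm_of_nonneg (div_nonneg hs hr)]
      exact mul_le_one₀ ((div_le_one hpos).2 hsr) (norm_nonneg ξ) hξ
  have hzero : M 0 = 0 := by
    refine le_antisymm (hM_le fun ξ _ => by rw [zero_smul, hV0]) ?_
    simpa only [smul_zero, hV0] using hle 0 (ξ := 0) (norm_zero.trans_le zero_le_one)
  refine ⟨_, isClassKInfty_add_id hcont.continuousOn hmono hzero, fun ξ => ?_⟩
  have hξ : ‖ξ‖ • (‖ξ‖⁻¹ • ξ) = ξ := by
    rcases eq_or_ne ξ 0 with rfl | hne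
    · simp only [smul_zero]
    · exact smul_inv_smul₀ (norm_ne_zero_iff.2 hne) ξ
  have : V (‖ξ‖ • (‖ξ‖⁻¹ • ξ)) ≤ M ‖ξ‖ := hle _ <| by
    rw [norm_smul, norm_inv, norm_norm]
    exact inv_mul_le_one
  rw [hξ] at this
  linarith [norm_nonneg ξ]

end Comparison

/-! ### Carathéodory trajectories -/

section Signal

variable {X D : Type*} [MeasurableSpace X] [NormedAddCommGroup D] [MeasurableSpace D] {C τ : ℝ}
  {w w₁ : ℝ → D}

/-- A signal, that is, an input or disturbance: a measurable function of time whose values have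
norm at most `C`. -/
structure IsBoundedSignal (C : ℝ) (w : ℝ → D) : Prop where
  measurable : Measurable w
  norm_le : ∀ s, ‖w s‖ ≤ C

/-- The concatenation of two functions of time: `a` up to time `τ`, then `b` restarted at `τ`. -/
def concatAt {X : Type*} (τ : ℝ) (a b : ℝ → X) (s : ℝ) : X := if s ≤ τ then a s else b (s - τ)

theorem concatAt_of_le {X : Type*} {a b : ℝ → X} {s : ℝ} (hs : s ≤ τ) : concatAt τ a b s = a s :=
  if_pos hs

theorem concatAt_of_lt {X : Type*} {a b : ℝ → X} {s : ℝ} (hs : τ < s) :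
    concatAt τ a b s = b (s - τ) :=
  if_neg hs.not_ge

theorem concatAt_shift {X : Type*} (a : ℝ → X) : concatAt τ a (fun s => a (s + τ)) = a := by
  funext s
  simp only [concatAt, sub_add_cancel, ite_self]

theorem IsBoundedSignal.const {v : D} (hv : ‖v‖ ≤ C) : IsBoundedSignal C fun _ : ℝ => v :=
  ⟨measurable_const, fun _ => hv⟩

theorem IsBoundedSignal.shift (hw : IsBoundedSignal C w) (τ : ℝ) :
    IsBoundedSignal C fun s => w (s + τ) :=
  ⟨hw.measurable.comp (measurable_id.add_const τ), fun s => hw.norm_le (s + τ)⟩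

theorem IsBoundedSignal.concatAt (hw : IsBoundedSignal C w) (hw₁ : IsBoundedSignal C w₁) (τ : ℝ) :
    IsBoundedSignal C (concatAt τ w w₁) where
  measurable := Measurable.ite measurableSet_Iic hw.measurable
    (hw₁.measurable.comp (measurable_id.sub_const τ))
  norm_le s := by
    unfold _root_.concatAt
    split_ifs
    exacts [hw.norm_le s, hw₁.norm_le (s - τ)]

end Signal

section Field

variable {E D F : Type*} [NormedAddCommGroup E] [ProperSpace E] [NormedAddCommGroup D]
  [ProperSpace D] [NormedAddCommGroup F] {H : E × D → F}

theorem exists_norm_le_of_continuous (hH : Continuous H) (R C : ℝ) :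
    ∃ M, ∀ x v, ‖x‖ ≤ R → ‖v‖ ≤ C → ‖H (x, v)‖ ≤ M := by
  obtain ⟨M, hM⟩ := ((isCompact_closedBall (0 : E) R).prod
    (isCompact_closedBall (0 : D) C)).exists_bound_of_continuousOn hH.continuousOn
  exact ⟨M, fun x v hx hv => hM (x, v) ⟨by simpa using hx, by simpa using hv⟩⟩

theorem exists_norm_sub_le_of_locallyLipschitz (hH : LocallyLipschitz H) (R C : ℝ) :
    ∃ K, 0 ≤ K ∧ ∀ x y v, ‖x‖ ≤ R → ‖y‖ ≤ R → ‖v‖ ≤ C →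
      ‖H (x, v) - H (y, v)‖ ≤ K * ‖x - y‖ := by
  obtain ⟨K, hK⟩ := LocallyLipschitzOn.exists_lipschitzOnWith_of_compact
    ((isCompact_closedBall (0 : E) R).prod (isCompact_closedBall (0 : D) C))
    hH.locallyLipschitzOn
  refine ⟨K, K.2, fun x y v hx hy hv => ?_⟩
  have := hK.norm_sub_le (x := (x, v)) (y := (y, v)) ⟨by simpa using hx, by simpa using hv⟩
    ⟨by simpa using hy, by simpa using hv⟩
  simpa [Prod.norm_def] using this

variable [MeasurableSpace D] [BorelSpace D]

theorem integrableOn_field (hH : Continuous H) {C R : ℝ} {w : ℝ → D} (hw : IsBoundedSignal C w)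
    {S : Set ℝ} (hS : MeasurableSet S) (hfin : volume S ≠ ⊤) {z : ℝ → E}
    (hz : AEStronglyMeasurable z (volume.restrict S)) (hR : ∀ t ∈ S, ‖z t‖ ≤ R) :
    IntegrableOn (fun s => H (z s, w s)) S := by
  obtain ⟨M, hM⟩ := exists_norm_le_of_continuous hH R C
  have : IsFiniteMeasure (volume.restrict S) := isFiniteMeasure_restrict.2 hfin
  refine Integrable.of_bound (C := M) ?_ ?_
  · exact hH.comp_aestronglyMeasurable (hz.prodMk hw.measurable.aestronglyMeasurable)
  · exact (ae_restrict_iff' hS).2 (ae_of_all _ fun t ht => hM _ _ (hR t ht) (hw.norm_le t))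

theorem intervalIntegrable_field (hH : Continuous H) {C : ℝ} {w : ℝ → D}
    (hw : IsBoundedSignal C w) {a b : ℝ} {z : ℝ → E} (hz : ContinuousOn z (uIcc a b)) :
    IntervalIntegrable (fun s => H (z s, w s)) volume a b := by
  obtain ⟨R, hR⟩ := isCompact_uIcc.exists_bound_of_continuousOn hz
  exact (integrableOn_field hH hw measurableSet_uIcc (by simp [uIcc])
    (hz.aestronglyMeasurable measurableSet_uIcc) hR).intervalIntegrable

end Field

section Trajectory

variable {E D : Type*} [NormedAddCommGroup E] [NormedSpace ℝ E]

/-- `z` is a Carathéodory trajectory on `[0,T]` of `ż = H(z,w)` starting at `ξ`. -/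
structure IsTrajectoryOn (H : E × D → E) (w : ℝ → D) (ξ : E) (z : ℝ → E) (T : ℝ) : Prop where
  nonneg : 0 ≤ T
  continuousOn : ContinuousOn z (Icc 0 T)
  eq_add_integral : ∀ t ∈ Icc 0 T, z t = ξ + ∫ s in (0 : ℝ)..t, H (z s, w s)

variable {H : E × D → E} {w w₁ : ℝ → D} {ξ : E} {z z₁ : ℝ → E} {C R T τ : ℝ}

namespace IsTrajectoryOn

theorem apply_zero (hz : IsTrajectoryOn H w ξ z T) : z 0 = ξ := by
  simpa using hz.eq_add_integral 0 ⟨le_rfl, hz.nonneg⟩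

theorem mono (hz : IsTrajectoryOn H w ξ z T) (hτ : 0 ≤ τ) (hτT : τ ≤ T) :
    IsTrajectoryOn H w ξ z τ :=
  ⟨hτ, hz.continuousOn.mono (Icc_subset_Icc_right hτT),
    fun t ht => hz.eq_add_integral t ⟨ht.1, ht.2.trans hτT⟩⟩

theorem congr {D' : Type*} {H' : E × D' → E} {w' : ℝ → D'} (hz : IsTrajectoryOn H w ξ z T)
    (hzz₁ : EqOn z z₁ (Icc 0 T)) (h : ∀ s ∈ Icc 0 T, H (z s, w s) = H' (z₁ s, w' s)) :
    IsTrajectoryOn H' w' ξ z₁ T where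
  nonneg := hz.nonneg
  continuousOn := hz.continuousOn.congr hzz₁.symm
  eq_add_integral t ht := by
    rw [← hzz₁ ht, hz.eq_add_integral t ht]
    congr 1
    refine intervalIntegral.integral_congr fun s hs => ?_
    rw [uIcc_of_le ht.1] at hs
    exact h s ⟨hs.1, hs.2.trans ht.2⟩

theorem hasDerivWithinAt_zero [CompleteSpace E] [TopologicalSpace D] {v : D}
    (hz : IsTrajectoryOn H (fun _ => v) ξ z T) (hT : 0 < T) (hH : Continuous H) :
    HasDerivWithinAt z (H (ξ, v)) (Ici 0) 0 := by
  have h0 : (0 : ℝ) ∈ Icc 0 T := ⟨le_rfl, hT.le⟩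
  have : Fact ((0 : ℝ) ∈ Icc 0 T) := ⟨h0⟩
  have hcont : ContinuousOn (fun s => H (z s, v)) (Icc 0 T) :=
    hH.comp_continuousOn (hz.continuousOn.prodMk continuousOn_const)
  have hprim := intervalIntegral.integral_hasDerivWithinAt_right (a := 0) (s := Icc 0 T)
    (t := Icc 0 T) (by simp) (hcont.stronglyMeasurableAtFilter_nhdsWithin measurableSet_Icc 0)
    (hcont 0 h0)
  rw [hz.apply_zero] at hprim
  exact ((hprim.const_add ξ).congr_of_mem hz.eq_add_integral h0).mono_of_mem_nhdsWithin
    (Icc_mem_nhdsGE hT)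

end IsTrajectoryOn

theorem isTrajectoryOn_zero : IsTrajectoryOn H w ξ (fun _ => ξ) 0 where
  nonneg := le_rfl
  continuousOn := continuousOn_const
  eq_add_integral t ht := by simp [le_antisymm ht.2 ht.1]

theorem isTrajectoryOn_of_intervalIntegrable (hT : 0 ≤ T)
    (hz : ∀ t, 0 ≤ t → z t = ξ + ∫ s in (0 : ℝ)..t, H (z s, w s))
    (hi : IntervalIntegrable (fun s => H (z s, w s)) volume 0 T) : IsTrajectoryOn H w ξ z T := by
  refine ⟨hT, ?_, fun t ht => hz t ht.1⟩
  have hprim := intervalIntegral.continuousOn_primitive_interval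
    ((intervalIntegrable_iff' (by simp)).1 hi)
  rw [uIcc_of_le hT] at hprim
  exact (continuousOn_const.add hprim).congr fun t ht => hz t ht.1

theorem concatAt_of_ge (hz₁ : IsTrajectoryOn H w₁ (z τ) z₁ T) {s : ℝ} (hs : τ ≤ s) :
    concatAt τ z z₁ s = z₁ (s - τ) := by
  rcases hs.eq_or_lt with rfl | hs
  · rw [concatAt_of_le le_rfl, sub_self, hz₁.apply_zero]
  · exact concatAt_of_lt hs

theorem IsTrajectoryOn.continuousOn_concatAt (hz : IsTrajectoryOn H w ξ z τ)
    (hz₁ : IsTrajectoryOn H w₁ (z τ) z₁ T) :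
    ContinuousOn (concatAt τ z z₁) (Icc 0 (τ + T)) := by
  have hfirst : ContinuousOn (concatAt τ z z₁) (Icc 0 τ) :=
    hz.continuousOn.congr fun s hs => concatAt_of_le hs.2
  have hsecond : ContinuousOn (concatAt τ z z₁) (Icc τ (τ + T)) := by
    refine ContinuousOn.congr (f := fun s => z₁ (s - τ)) ?_ fun s hs => concatAt_of_ge hz₁ hs.1
    exact hz₁.continuousOn.comp (by fun_prop)
      fun s hs => ⟨sub_nonneg.2 hs.1, sub_le_iff_le_add'.2 hs.2⟩
  have := hfirst.union_of_isClosed hsecond isClosed_Icc isClosed_Icc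
  rwa [Icc_union_Icc_eq_Icc hz.nonneg (le_add_of_nonneg_right hz₁.nonneg)] at this

variable [ProperSpace E] [NormedAddCommGroup D] [ProperSpace D] [MeasurableSpace D] [BorelSpace D]

namespace IsTrajectoryOn

theorem intervalIntegrable (hz : IsTrajectoryOn H w ξ z T) (hH : Continuous H)
    (hw : IsBoundedSignal C w) {a b : ℝ} (ha : a ∈ Icc 0 T) (hb : b ∈ Icc 0 T) :
    IntervalIntegrable (fun s => H (z s, w s)) volume a b :=
  intervalIntegrable_field hH hw
    (hz.continuousOn.mono ((convex_Icc (0 : ℝ) T).ordConnected.uIcc_subset ha hb))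

theorem sub_eq_integral (hz : IsTrajectoryOn H w ξ z T) (hH : Continuous H)
    (hw : IsBoundedSignal C w) {a b : ℝ} (ha : a ∈ Icc 0 T) (hb : b ∈ Icc 0 T) :
    z b - z a = ∫ s in a..b, H (z s, w s) := by
  have h0 : (0 : ℝ) ∈ Icc 0 T := ⟨le_rfl, hz.nonneg⟩
  rw [hz.eq_add_integral a ha, hz.eq_add_integral b hb, add_sub_add_left_eq_sub,
    intervalIntegral.integral_interval_sub_left (hz.intervalIntegrable hH hw h0 hb)
      (hz.intervalIntegrable hH hw h0 ha)]

theorem exists_lipschitzOnWith (hz : IsTrajectoryOn H w ξ z T) (hH : Continuous H)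
    (hw : IsBoundedSignal C w) : ∃ K, LipschitzOnWith K z (Icc 0 T) := by
  obtain ⟨R, hR⟩ := isCompact_Icc.exists_bound_of_continuousOn hz.continuousOn
  obtain ⟨M, hM⟩ := exists_norm_le_of_continuous hH R C
  refine ⟨M.toNNReal, LipschitzOnWith.of_dist_le_mul fun b hb a ha => ?_⟩
  rw [dist_eq_norm, hz.sub_eq_integral hH hw ha hb, Real.dist_eq]
  refine intervalIntegral.norm_integral_le_of_norm_le_const fun s hs => ?_
  have hs' : s ∈ Icc 0 T :=
    (convex_Icc (0 : ℝ) T).ordConnected.uIcc_subset ha hb (uIoc_subset_uIcc hs)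
  exact (hM _ _ (hR s hs') (hw.norm_le s)).trans (Real.le_coe_toNNReal M)

end IsTrajectoryOn

theorem IsTrajectoryOn.concatAt (hH : Continuous H) (hw : IsBoundedSignal C w)
    (hw₁ : IsBoundedSignal C w₁) (hz : IsTrajectoryOn H w ξ z τ)
    (hz₁ : IsTrajectoryOn H w₁ (z τ) z₁ T) :
    IsTrajectoryOn H (concatAt τ w w₁) ξ (concatAt τ z z₁) (τ + T) := by
  have hτ := hz.nonneg
  have hcont := hz.continuousOn_concatAt hz₁
  refine ⟨add_nonneg hτ hz₁.nonneg, hcont, fun t ht => ?_⟩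
  have hint {a b : ℝ} (ha : a ∈ Icc 0 (τ + T)) (hb : b ∈ Icc 0 (τ + T)) :
      IntervalIntegrable (fun s => H (_root_.concatAt τ z z₁ s, _root_.concatAt τ w w₁ s))
        volume a b :=
    intervalIntegrable_field hH (hw.concatAt hw₁ τ)
      (hcont.mono ((convex_Icc (0 : ℝ) (τ + T)).ordConnected.uIcc_subset ha hb))
  have hfirst : IsTrajectoryOn H (_root_.concatAt τ w w₁) ξ (_root_.concatAt τ z z₁) τ :=
    hz.congr (fun s hs => (concatAt_of_le hs.2).symm)
      fun s hs => by rw [concatAt_of_le hs.2, concatAt_of_le hs.2]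
  rcases le_total t τ with htτ | htτ
  · exact hfirst.eq_add_integral t ⟨ht.1, htτ⟩
  have hτmem : τ ∈ Icc 0 (τ + T) := ⟨hτ, htτ.trans ht.2⟩
  calc _root_.concatAt τ z z₁ t
      = z τ + ∫ s in (0 : ℝ)..t - τ, H (z₁ s, w₁ s) := by
        rw [concatAt_of_ge hz₁ htτ, hz₁.eq_add_integral _
          ⟨sub_nonneg.2 htτ, sub_le_iff_le_add'.2 ht.2⟩]
    _ = z τ + ∫ s in τ..t, H (z₁ (s - τ), w₁ (s - τ)) := by
        rw [intervalIntegral.integral_comp_sub_right (fun s => H (z₁ s, w₁ s)), sub_self]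
    _ = z τ + ∫ s in τ..t, H (_root_.concatAt τ z z₁ s, _root_.concatAt τ w w₁ s) := by
        congr 1
        refine intervalIntegral.integral_congr_ae (ae_of_all _ fun s hs => ?_)
        rw [uIoc_of_le htτ] at hs
        rw [concatAt_of_lt hs.1, concatAt_of_lt hs.1]
    _ = _ := by
        rw [← concatAt_of_le (τ := τ) (a := z) (b := z₁) le_rfl,
          hfirst.eq_add_integral τ ⟨hτ, le_rfl⟩, add_assoc,
          intervalIntegral.integral_add_adjacent_intervals
            (hint ⟨le_rfl, add_nonneg hτ hz₁.nonneg⟩ hτmem) (hint hτmem ht)]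

/-- Interval integrals of non-integrable functions vanish, so a solution of the integral equation
may be spurious; an a priori bound on the genuine trajectories excludes this. -/
theorem isTrajectoryOn_of_forall_eq (hH : Continuous H) (hw : IsBoundedSignal C w)
    (hz : ∀ t, 0 ≤ t → z t = ξ + ∫ s in (0 : ℝ)..t, H (z s, w s))
    (hR : ∀ T, IsTrajectoryOn H w ξ z T → ‖z T‖ ≤ R) (hT : 0 ≤ T) :
    IsTrajectoryOn H w ξ z T := by
  set I : Set ℝ := {t | 0 ≤ t ∧ IntervalIntegrable (fun s => H (z s, w s)) volume 0 t}
  have htraj : ∀ t ∈ I, IsTrajectoryOn H w ξ z t := fun t ht =>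
    isTrajectoryOn_of_intervalIntegrable ht.1 hz ht.2
  have heq : ∀ t ∈ Icc 0 T \ I, z t = ξ := fun t ht => by
    rw [hz t ht.1.1, intervalIntegral.integral_undef fun h => ht.2 ⟨ht.1.1, h⟩, add_zero]
  have hI : MeasurableSet I := by
    refine OrdConnected.measurableSet ⟨fun a ha b hb t ht => ⟨ha.1.trans ht.1, hb.2.mono_set ?_⟩⟩
    rw [uIcc_of_le (ha.1.trans ht.1), uIcc_of_le hb.1]
    exact Icc_subset_Icc_right ht.2
  have hcont : ContinuousOn z I := by
    intro t ht
    by_cases hlast : ∃ r ∈ I, t < r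
    · obtain ⟨r, hr, htr⟩ := hlast
      refine ((htraj r hr).continuousOn t ⟨ht.1, htr.le⟩).mono_of_mem_nhdsWithin ?_
      filter_upwards [self_mem_nhdsWithin, mem_nhdsWithin_of_mem_nhds (gt_mem_nhds htr)]
        with s hs hsr using ⟨hs.1, hsr.le⟩
    · push Not at hlast
      exact ((htraj t ht).continuousOn t ⟨ht.1, le_rfl⟩).mono fun s hs => ⟨hs.1, hlast s hs⟩
  have hmeas : AEStronglyMeasurable z (volume.restrict (Icc 0 T)) := by
    have hunion : AEStronglyMeasurable z (volume.restrict (I ∪ (Icc 0 T \ I))) :=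
      aestronglyMeasurable_union_iff.2 ⟨hcont.aestronglyMeasurable hI,
        (continuousOn_const.congr heq).aestronglyMeasurable (measurableSet_Icc.diff hI)⟩
    exact hunion.mono_set (by simp)
  refine isTrajectoryOn_of_intervalIntegrable hT hz ?_
  rw [intervalIntegrable_iff_integrableOn_Icc_of_le hT]
  refine integrableOn_field hH hw measurableSet_Icc (by simp) hmeas (R := max R ‖ξ‖) fun t ht => ?_
  by_cases htI : t ∈ I
  · exact (hR t (htraj t htI)).trans (le_max_left _ _)
  · rw [heq t ⟨ht, htI⟩]
    exact le_max_right _ _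

end Trajectory

theorem le_mul_exp_of_le_add_mul_integral {φ : ℝ → ℝ} {a K T : ℝ} (hK : 0 ≤ K)
    (hφ : ContinuousOn φ (Icc 0 T)) (h : ∀ t ∈ Icc 0 T, φ t ≤ a + K * ∫ s in (0 : ℝ)..t, φ s) :
    ∀ t ∈ Icc 0 T, φ t ≤ a * Real.exp (K * t) := by
  intro t ht
  have hT : 0 ≤ T := ht.1.trans ht.2
  let ψ : ℝ → ℝ := IccExtend hT ((Icc 0 T).domRestrict φ)
  have hψ : Continuous ψ := (continuousOn_iff_continuous_domRestrict.1 hφ).Icc_extend'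
  have hψφ : ∀ s ∈ Icc 0 T, ψ s = φ s := fun s hs => IccExtend_of_mem hT _ hs
  have hint : ∀ s ∈ Icc 0 T, ∫ r in (0 : ℝ)..s, φ r = ∫ r in (0 : ℝ)..s, ψ r := by
    intro s hs
    refine intervalIntegral.integral_congr fun r hr => ?_
    rw [uIcc_of_le hs.1] at hr
    exact (hψφ r ⟨hr.1, hr.2.trans hs.2⟩).symm
  have hderiv (s : ℝ) : HasDerivAt (fun s => a + K * ∫ r in (0 : ℝ)..s, ψ r) (K * ψ s) s :=
    ((hψ.integral_hasStrictDerivAt 0 s).hasDerivAt.const_mul K).const_add a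
  have hgronwall : a + K * ∫ r in (0 : ℝ)..t, ψ r ≤ gronwallBound a K 0 (t - 0) :=
    le_gronwallBound_of_liminf_deriv_right_le (f' := fun s => K * ψ s)
      (fun s _ => (hderiv s).continuousAt.continuousWithinAt)
      (fun s _ r hr => (hderiv s).hasDerivWithinAt.liminf_right_slope_le hr) (by simp)
      (fun s hs => by
        have hs' : s ∈ Icc 0 T := Ico_subset_Icc_self hs
        rw [add_zero, ← hint s hs', hψφ s hs']
        exact mul_le_mul_of_nonneg_left (h s hs') hK) t ht
  rw [gronwallBound_ε0, sub_zero, ← hint t ht] at hgronwall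
  exact (h t ht).trans hgronwall

theorem le_of_forall_le_add_one {φ : ℝ → ℝ} {R T : ℝ} (hφ : ContinuousOn φ (Icc 0 T))
    (h0 : φ 0 ≤ R) (h : ∀ t ∈ Icc 0 T, (∀ s ∈ Icc 0 t, φ s ≤ R + 1) → φ t ≤ R) :
    ∀ t ∈ Icc 0 T, φ t ≤ R := by
  have hclosed : IsClosed ({t | φ t ≤ R} ∩ Icc 0 T) := by
    rw [inter_comm]
    exact hφ.preimage_isClosed_of_isClosed isClosed_Icc isClosed_Iic
  refine hclosed.Icc_subset_of_forall_mem_nhdsGT_of_Icc_subset h0 fun t ht hle => ?_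
  have hIcc : Icc 0 T ∈ 𝓝[≥] t :=
    mem_of_superset (Icc_mem_nhdsGE ht.2) (Icc_subset_Icc_left ht.1)
  have hnear : ∀ᶠ s in 𝓝[≥] t, φ s < R + 1 :=
    ((hφ t ⟨ht.1, ht.2.le⟩).mono_of_mem_nhdsWithin hIcc).eventually_lt_const
      ((hle ⟨ht.1, le_rfl⟩).trans_lt (lt_add_one R))
  obtain ⟨u, htu, hu⟩ := mem_nhdsGE_iff_exists_Icc_subset.1 (inter_mem hIcc hnear)
  filter_upwards [Ioo_mem_nhdsGT htu] with s hs
  refine h s (hu ⟨hs.1.le, hs.2.le⟩).1 fun r hr => ?_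
  rcases le_total r t with hrt | htr
  · exact (hle ⟨hr.1, hrt⟩).trans (lt_add_one R).le
  · exact (hu ⟨htr, hr.2.trans hs.2.le⟩).2.le

section Trajectory

variable {E D : Type*} [NormedAddCommGroup E] [NormedSpace ℝ E] [NormedAddCommGroup D]
  [ProperSpace D] [MeasurableSpace D] [BorelSpace D] {H : E × D → E} {w : ℝ → D} {ξ ξ' : E}
  {z z' : ℝ → E} {C R T : ℝ}

section Uniqueness

variable [ProperSpace E]

theorem IsTrajectoryOn.norm_sub_le {K : ℝ} (hH : Continuous H) (hw : IsBoundedSignal C w)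
    (hK0 : 0 ≤ K)
    (hK : ∀ x y v, ‖x‖ ≤ R → ‖y‖ ≤ R → ‖v‖ ≤ C → ‖H (x, v) - H (y, v)‖ ≤ K * ‖x - y‖)
    (hz : IsTrajectoryOn H w ξ z T) (hz' : IsTrajectoryOn H w ξ' z' T)
    (hR : ∀ t ∈ Icc 0 T, ‖z t‖ ≤ R) (hR' : ∀ t ∈ Icc 0 T, ‖z' t‖ ≤ R) :
    ∀ t ∈ Icc 0 T, ‖z t - z' t‖ ≤ ‖ξ - ξ'‖ * Real.exp (K * t) := by
  have hcont : ContinuousOn (fun t => ‖z t - z' t‖) (Icc 0 T) :=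
    (hz.continuousOn.sub hz'.continuousOn).norm
  refine le_mul_exp_of_le_add_mul_integral hK0 hcont fun t ht => ?_
  have h0 : (0 : ℝ) ∈ Icc 0 T := ⟨le_rfl, hz.nonneg⟩
  have hsub : z t - z' t = (ξ - ξ') + ∫ s in (0 : ℝ)..t, (H (z s, w s) - H (z' s, w s)) := by
    rw [intervalIntegral.integral_sub (hz.intervalIntegrable hH hw h0 ht)
      (hz'.intervalIntegrable hH hw h0 ht), hz.eq_add_integral t ht, hz'.eq_add_integral t ht]
    abel
  rw [hsub, ← intervalIntegral.integral_const_mul]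
  refine norm_add_le_of_le le_rfl
    (intervalIntegral.norm_integral_le_of_norm_le ht.1 (ae_of_all _ fun s hs => ?_) ?_)
  · have hs' : s ∈ Icc 0 T := ⟨hs.1.le, hs.2.trans ht.2⟩
    exact hK _ _ _ (hR s hs') (hR' s hs') (hw.norm_le s)
  · refine ContinuousOn.intervalIntegrable ?_
    rw [uIcc_of_le ht.1]
    exact continuousOn_const.mul (hcont.mono (Icc_subset_Icc_right ht.2))

theorem IsTrajectoryOn.eqOn (hH : LocallyLipschitz H) (hw : IsBoundedSignal C w)
    (hz : IsTrajectoryOn H w ξ z T) (hz' : IsTrajectoryOn H w ξ z' T) :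
    EqOn z z' (Icc 0 T) := by
  obtain ⟨R, hR⟩ := isCompact_Icc.exists_bound_of_continuousOn hz.continuousOn
  obtain ⟨R', hR'⟩ := isCompact_Icc.exists_bound_of_continuousOn hz'.continuousOn
  obtain ⟨K, hK0, hK⟩ := exists_norm_sub_le_of_locallyLipschitz hH (max R R') C
  intro t ht
  have := hz.norm_sub_le hH.continuous hw hK0 hK hz'
    (fun t ht => (hR t ht).trans (le_max_left _ _))
    (fun t ht => (hR' t ht).trans (le_max_right _ _)) t ht
  rw [sub_self, norm_zero, zero_mul] at this
  exact sub_eq_zero.1 (norm_le_zero_iff.1 this)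

end Uniqueness

variable [FiniteDimensional ℝ E] {K : ℝ≥0}

theorem exists_isTrajectoryOn_of_mul_le_half (hH : LipschitzWith K H) (hw : IsBoundedSignal C w)
    (hT : 0 ≤ T) (hKT : K * T ≤ 1 / 2) (ξ : E) : ∃ z, IsTrajectoryOn H w ξ z T := by
  have hint (z : C(Icc 0 T, E)) (a b : ℝ) :
      IntervalIntegrable (fun s => H (IccExtend hT z s, w s)) volume a b :=
    intervalIntegrable_field hH.continuous hw z.continuous.Icc_extend'.continuousOn
  let Φ : C(Icc 0 T, E) → C(Icc 0 T, E) := fun z =>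
    ⟨fun t => ξ + ∫ s in (0 : ℝ)..t, H (IccExtend hT z s, w s), continuous_const.add
      ((intervalIntegral.continuous_primitive (hint z) 0).comp continuous_subtype_val)⟩
  have hlip (z z' : C(Icc 0 T, E)) (s : ℝ) :
      ‖H (IccExtend hT z s, w s) - H (IccExtend hT z' s, w s)‖ ≤ K * dist z z' := by
    refine (hH.norm_sub_le _ _).trans ?_
    rw [Prod.mk_sub_mk, sub_self, Prod.norm_mk, norm_zero, max_eq_left (norm_nonneg _),
      ← dist_eq_norm]
    exact mul_le_mul_of_nonneg_left (ContinuousMap.dist_apply_le_dist _) K.2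
  have hΦ : ContractingWith 2⁻¹ Φ := by
    refine ⟨by rw [← NNReal.coe_lt_coe]; norm_num, LipschitzWith.of_dist_le_mul fun z z' => ?_⟩
    refine (ContinuousMap.dist_le (by positivity)).2 fun t => ?_
    calc dist (Φ z t) (Φ z' t)
        = ‖∫ s in (0 : ℝ)..t,
            (H (IccExtend hT z s, w s) - H (IccExtend hT z' s, w s))‖ := by
          rw [intervalIntegral.integral_sub (hint z _ _) (hint z' _ _), dist_eq_norm]
          exact congrArg norm (add_sub_add_left_eq_sub _ _ _)
      _ ≤ K * dist z z' * |(t : ℝ) - 0| :=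
          intervalIntegral.norm_integral_le_of_norm_le_const fun s _ => hlip z z' s
      _ ≤ K * T * dist z z' := by
          rw [sub_zero, abs_of_nonneg t.2.1, mul_right_comm]
          gcongr
          exact t.2.2
      _ ≤ _ := by
          refine mul_le_mul_of_nonneg_right (hKT.trans_eq ?_) dist_nonneg
          simp
  obtain ⟨y, hy⟩ : ∃ y, Φ y = y := ⟨_, hΦ.fixedPoint_isFixedPt⟩
  refine ⟨IccExtend hT y, hT, y.continuous.Icc_extend'.continuousOn, fun t ht => ?_⟩
  rw [IccExtend_of_mem hT _ ht]
  exact (DFunLike.congr_fun hy ⟨t, ht⟩).symm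

theorem exists_isTrajectoryOn_of_lipschitzWith (hH : LipschitzWith K H) (hw : IsBoundedSignal C w)
    (ξ : E) (hT : 0 ≤ T) : ∃ z, IsTrajectoryOn H w ξ z T := by
  set τ : ℝ := 1 / (2 * (K + 1)) with hτ_def
  have hτ : 0 < τ := by positivity
  have hKτ : K * τ ≤ 1 / 2 := by
    rw [hτ_def, mul_one_div, div_le_div_iff₀ (by positivity) two_pos]
    linarith
  have hsteps (n : ℕ) : ∃ z, IsTrajectoryOn H w ξ z (n * τ) := by
    induction n with
    | zero => exact ⟨_, by simpa using isTrajectoryOn_zero⟩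
    | succ n ih =>
      obtain ⟨z, hz⟩ := ih
      obtain ⟨z₁, hz₁⟩ :=
        exists_isTrajectoryOn_of_mul_le_half hH (hw.shift (n * τ)) hτ.le hKτ (z (n * τ))
      have hconcat := IsTrajectoryOn.concatAt hH.continuous hw (hw.shift _) hz hz₁
      rw [concatAt_shift, ← add_one_mul, ← Nat.cast_succ] at hconcat
      exact ⟨_, hconcat⟩
  obtain ⟨n, hn⟩ := exists_nat_ge (T / τ)
  obtain ⟨z, hz⟩ := hsteps n
  exact ⟨z, hz.mono hT ((div_le_iff₀ hτ).1 hn)⟩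

theorem exists_isTrajectoryOn_of_norm_le (hH : LocallyLipschitz H) (hw : IsBoundedSignal C w)
    (hR : ∀ z T, IsTrajectoryOn H w ξ z T → ‖z T‖ ≤ R) (hT : 0 ≤ T) :
    ∃ z, IsTrajectoryOn H w ξ z T := by
  -- Extend `H` from a compact set which the trajectory cannot leave to a globally Lipschitz field.
  obtain ⟨K, hK⟩ := LocallyLipschitzOn.exists_lipschitzOnWith_of_compact
    ((isCompact_closedBall (0 : E) (R + 1)).prod (isCompact_closedBall (0 : D) C))
    hH.locallyLipschitzOn
  obtain ⟨G, hG, hHG⟩ := hK.extend_finite_dimension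
  obtain ⟨z, hz⟩ := exists_isTrajectoryOn_of_lipschitzWith hG hw ξ hT
  have hagree : ∀ t ∈ Icc 0 T, (∀ s ∈ Icc 0 t, ‖z s‖ ≤ R + 1) → IsTrajectoryOn H w ξ z t := by
    intro t ht hle
    refine (hz.mono ht.1 ht.2).congr (fun _ _ => rfl) fun s hs => (hHG ⟨?_, ?_⟩).symm
    · simpa using hle s hs
    · simpa using hw.norm_le s
  have hbound : ∀ t ∈ Icc 0 T, ‖z t‖ ≤ R :=
    le_of_forall_le_add_one hz.continuousOn.norm
      (hz.apply_zero ▸ hR _ 0 isTrajectoryOn_zero) fun t ht hle => hR z t (hagree t ht hle)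
  exact ⟨z, hagree T ⟨hT, le_rfl⟩ fun s hs => (hbound s hs).trans (lt_add_one R).le⟩

theorem exists_forall_isTrajectoryOn (hH : LocallyLipschitz H) (hw : IsBoundedSignal C w)
    (hR : ∀ z T, IsTrajectoryOn H w ξ z T → ‖z T‖ ≤ R) :
    ∃ z, ∀ T, 0 ≤ T → IsTrajectoryOn H w ξ z T := by
  choose! y hy using fun T hT => exists_isTrajectoryOn_of_norm_le (T := T) hH hw hR hT
  refine ⟨fun t => y t t, fun T hT => (hy T hT).congr (fun t ht => ?_) fun t ht => ?_⟩
  all_goals have := (hy T hT).mono ht.1 ht.2 |>.eqOn hH hw (hy t ht.1) ⟨ht.1, le_rfl⟩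
  · exact this
  · rw [this]

end Trajectory

section ChainRule

variable {E D : Type*} [NormedAddCommGroup E] [NormedSpace ℝ E] [ProperSpace E]
  [NormedAddCommGroup D] [ProperSpace D] [MeasurableSpace D] [BorelSpace D]
  {H : E × D → E} {w : ℝ → D} {ξ : E} {z : ℝ → E} {C T : ℝ} {V : E → ℝ}

theorem IsTrajectoryOn.ae_hasDerivAt (hz : IsTrajectoryOn H w ξ z T) (hH : Continuous H)
    (hw : IsBoundedSignal C w) : ∀ᵐ t, t ∈ Icc 0 T → HasDerivAt z (H (z t, w t)) t := by
  have h0 : (0 : ℝ) ∈ Icc 0 T := ⟨le_rfl, hz.nonneg⟩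
  have hT : T ∈ Icc 0 T := ⟨hz.nonneg, le_rfl⟩
  filter_upwards [(hz.intervalIntegrable hH hw h0 hT).ae_hasDerivAt_integral,
    compl_mem_ae_iff.2 (measure_singleton 0), compl_mem_ae_iff.2 (measure_singleton T)]
    with t hderiv ht0 htT ht
  rw [uIcc_of_le hz.nonneg] at hderiv
  refine ((hderiv ht 0 h0).const_add ξ).congr_of_eventuallyEq ?_
  filter_upwards [Icc_mem_nhds (ht.1.lt_of_ne' ht0) (ht.2.lt_of_ne htT)] with s hs
    using hz.eq_add_integral s hs

theorem IsTrajectoryOn.sub_eq_integral_fderiv (hz : IsTrajectoryOn H w ξ z T) (hH : Continuous H)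
    (hw : IsBoundedSignal C w) (hV : ContDiff ℝ 1 V) {a b : ℝ} (ha : a ∈ Icc 0 T)
    (hb : b ∈ Icc 0 T) : V (z b) - V (z a) = ∫ s in a..b, fderiv ℝ V (z s) (H (z s, w s)) := by
  have hab : uIcc a b ⊆ Icc 0 T := (convex_Icc (0 : ℝ) T).ordConnected.uIcc_subset ha hb
  obtain ⟨K, hK⟩ := hz.exists_lipschitzOnWith hH hw
  obtain ⟨R, hR⟩ := isCompact_Icc.exists_bound_of_continuousOn hz.continuousOn
  obtain ⟨L, hL⟩ := hV.contDiffOn.exists_lipschitzOnWith one_ne_zero (convex_closedBall 0 R)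
    (isCompact_closedBall (0 : E) R)
  have hlip : LipschitzOnWith (L * K) (V ∘ z) (Icc 0 T) :=
    hL.comp hK fun t ht => mem_closedBall_zero_iff.2 (hR t ht)
  rw [← Function.comp_apply (f := V), ← Function.comp_apply (f := V),
    ← (hlip.mono hab).absolutelyContinuousOnInterval.integral_deriv_eq_sub]
  refine intervalIntegral.integral_congr_ae ?_
  filter_upwards [hz.ae_hasDerivAt hH hw] with t ht hmem
  exact ((hV.differentiable one_ne_zero (z t)).hasFDerivAt.comp_hasDerivAt t
    (ht (hab (uIoc_subset_uIcc hmem)))).deriv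

theorem IsTrajectoryOn.lyapunov_le (hz : IsTrajectoryOn H w ξ z T) (hH : Continuous H)
    (hw : IsBoundedSignal C w) (hV : ContDiff ℝ 1 V) {a b c : ℝ} (ha : 0 ≤ a) (hab : a ≤ b)
    (hbT : b ≤ T) (hc : ∀ s ∈ Icc a b, fderiv ℝ V (z s) (H (z s, w s)) ≤ -c) :
    V (z b) ≤ V (z a) - c * (b - a) := by
  have hsub := hz.sub_eq_integral_fderiv hH hw hV ⟨ha, hab.trans hbT⟩ ⟨ha.trans hab, hbT⟩
  have hint : IntervalIntegrable (fun s => fderiv ℝ V (z s) (H (z s, w s))) volume a b :=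
    intervalIntegrable_field (H := fun p : E × D => fderiv ℝ V p.1 (H p))
      (((hV.continuous_fderiv one_ne_zero).comp continuous_fst).clm_apply hH) hw
      (hz.continuousOn.mono (by rw [uIcc_of_le hab]; exact Icc_subset_Icc ha hbT))
  have hle := intervalIntegral.integral_mono_on hab hint intervalIntegrable_const hc
  rw [← hsub, intervalIntegral.integral_const, smul_eq_mul] at hle
  linarith

end ChainRule

/-! ### The closed loop of a bounded-input bounded-state system -/

section ClosedLoop

variable {E U F : Type*} [NormedAddCommGroup E] [NormedAddCommGroup U] [NormedSpace ℝ U]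
  [NormedAddCommGroup F] {f : E → U → E} {h : E → F} {lam l σ : ℝ → ℝ} {C T : ℝ}
  {ξ : E} {z : ℝ → E}

/-- The vector field `(x, d) ↦ f(x, λ(|h(x)|) d)` of the system `ẋ = f(x,u)`, `y = h(x)`, closed by
the output feedback with gain `λ`, as a function of the state and the disturbance. -/
def closedLoop (f : E → U → E) (h : E → F) (lam : ℝ → ℝ) (q : E × U) : E :=
  f q.1 (lam ‖h q.1‖ • q.2)

theorem IsClassK.continuous_comp_norm {X : Type*} [TopologicalSpace X] {g : X → F}
    (hl : IsClassK lam) (hg : Continuous g) : Continuous fun a => lam ‖g a‖ :=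
  hl.1.comp_continuous hg.norm fun _ => norm_nonneg _

theorem continuous_closedLoop (hf : Continuous fun q : E × U => f q.1 q.2) (hh : Continuous h)
    (hl : IsClassK lam) : Continuous (closedLoop f h lam) :=
  hf.comp (continuous_fst.prodMk
    ((hl.continuous_comp_norm (hh.comp continuous_fst)).smul continuous_snd))

theorem locallyLipschitz_closedLoop (hf : LocallyLipschitz fun q : E × U => f q.1 q.2)
    (hh : LocallyLipschitz h) (hl : LipschitzWith 1 lam) :
    LocallyLipschitz (closedLoop f h lam) := by
  have hgain : LocallyLipschitz fun q : E × U => lam ‖h q.1‖ :=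
    (hl.comp lipschitzWith_one_norm).locallyLipschitz.comp
      (hh.comp LipschitzWith.prod_fst.locallyLipschitz)
  have hsmul : LocallyLipschitz fun q : ℝ × U => q.1 • q.2 :=
    (contDiff_fst.smul contDiff_snd : ContDiff ℝ 1 fun q : ℝ × U => q.1 • q.2).locallyLipschitz
  exact hf.comp (LipschitzWith.prod_fst.locallyLipschitz.prodMk
    (hsmul.comp (hgain.prodMk LipschitzWith.prod_snd.locallyLipschitz)))

theorem norm_smul_le_of_norm_le_one (hl : IsClassK l) {r : ℝ} (hr : 0 ≤ r) {d : U}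
    (hd : ‖d‖ ≤ 1) : ‖l r • d‖ ≤ l r := by
  rw [norm_smul, Real.norm_of_nonneg (hl.nonneg hr)]
  exact mul_le_of_le_one_right (hl.nonneg hr) hd

variable [NormedSpace ℝ E]

theorem IsTrajectoryOn.exists_continuous_extension {D : Type*} {H : E × D → E} {w : ℝ → D}
    (hz : IsTrajectoryOn H w ξ z T) :
    ∃ z', Continuous z' ∧ EqOn z z' (Icc 0 T) ∧ ∀ s, ∃ t ∈ Icc 0 T, z' s = z t :=
  ⟨IccExtend hz.nonneg ((Icc 0 T).domRestrict z),
    (continuousOn_iff_continuous_domRestrict.1 hz.continuousOn).Icc_extend',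
    fun _ hs => (IccExtend_of_mem hz.nonneg ((Icc 0 T).domRestrict z) hs).symm,
    fun s => ⟨_, (projIcc 0 T _ s).2, rfl⟩⟩

variable [MeasurableSpace U]

/-- `σ` is a bounded-input bounded-state gain of `ẋ = f(x,u)`: the estimate of `IsBIBS`, stated for
trajectories on bounded intervals rather than for a solution map. -/
structure IsBIBSGain (f : E → U → E) (σ : ℝ → ℝ) : Prop where
  isClassK : IsClassK σ
  norm_le : ∀ ⦃C ξ u z T⦄, 0 ≤ C → IsBoundedSignal C u →
    IsTrajectoryOn (fun q : E × U => f q.1 q.2) u ξ z T → ‖z T‖ ≤ max (σ ‖ξ‖) (σ C)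

variable [ProperSpace U] [BorelSpace U] {d : ℝ → U}

/-- The closed-loop trajectory is an open-loop trajectory for the input `t ↦ λ(|h(z t)|) d(t)`. -/
theorem IsBIBSGain.norm_le_of_norm_output_le (hσ : IsBIBSGain f σ) (hh : Continuous h)
    (hl : IsClassK l) (hd : IsBoundedSignal 1 d) (hz : IsTrajectoryOn (closedLoop f h l) d ξ z T)
    (hC : ∀ t ∈ Icc 0 T, ‖h (z t)‖ ≤ C) : ‖z T‖ ≤ max (σ ‖ξ‖) (σ (l C)) := by
  obtain ⟨z', hz', heq, hmem⟩ := hz.exists_continuous_extension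
  have hC' (s : ℝ) : ‖h (z' s)‖ ≤ C := by
    obtain ⟨t, ht, hts⟩ := hmem s
    exact hts ▸ hC t ht
  have hC0 : 0 ≤ C := (norm_nonneg _).trans (hC' 0)
  have hu : IsBoundedSignal (l C) fun s => l ‖h (z' s)‖ • d s :=
    ⟨(hl.continuous_comp_norm (hh.comp hz')).measurable.smul hd.measurable, fun s =>
      (norm_smul_le_of_norm_le_one hl (norm_nonneg _) (hd.norm_le s)).trans
        (hl.mono (norm_nonneg _) (hC' s))⟩
  refine hσ.norm_le (hl.nonneg hC0) hu (hz.congr (fun _ _ => rfl) fun s hs => ?_)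
  simp only [closedLoop, heq hs]

theorem IsBIBSGain.exists_norm_le (hσ : IsBIBSGain f σ) (hh : Continuous h) (hl : IsClassK l)
    {b : ℝ → ℝ} (hb : IsClassK b)
    (hout : ∀ ξ d z T, IsBoundedSignal 1 d → IsTrajectoryOn (closedLoop f h l) d ξ z T →
      ‖h (z T)‖ ≤ b ‖ξ‖) :
    ∃ ρ, IsClassK ρ ∧ ∀ ξ d z T, IsBoundedSignal 1 d →
      IsTrajectoryOn (closedLoop f h l) d ξ z T → ‖z T‖ ≤ ρ ‖ξ‖ :=
  ⟨fun s => max (σ s) (σ (l (b s))), hσ.isClassK.max (hσ.isClassK.comp (hl.comp hb)),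
    fun ξ d z _ hd hz => hσ.norm_le_of_norm_output_le hh hl hd hz fun t ht =>
      hout ξ d z t hd (hz.mono ht.1 ht.2)⟩

theorem IsTrajectoryOn.exists_closedLoop_of_gain_le
    (hz : IsTrajectoryOn (closedLoop f h l) d ξ z T) (hd : IsBoundedSignal 1 d) (hh : Continuous h)
    (hl : IsClassK l) (hlam : IsClassK lam) (hle : ∀ s, 0 ≤ s → l s ≤ lam s) :
    ∃ d', IsBoundedSignal 1 d' ∧ IsTrajectoryOn (closedLoop f h lam) d' ξ z T := by
  obtain ⟨z', hz', heq, -⟩ := hz.exists_continuous_extension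
  refine ⟨fun s => (l ‖h (z' s)‖ / lam ‖h (z' s)‖) • d s, ⟨?_, fun s => ?_⟩,
    hz.congr (fun _ _ => rfl) fun s hs => ?_⟩
  · exact ((hl.continuous_comp_norm (hh.comp hz')).measurable.div
      (hlam.continuous_comp_norm (hh.comp hz')).measurable).smul hd.measurable
  · have hl0 := hl.nonneg (norm_nonneg (h (z' s)))
    have hlam0 := hlam.nonneg (norm_nonneg (h (z' s)))
    rw [norm_smul, Real.norm_of_nonneg (div_nonneg hl0 hlam0)]
    exact mul_le_one₀ (div_le_one_of_le₀ (hle _ (norm_nonneg _)) hlam0) (norm_nonneg _)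
      (hd.norm_le s)
  · have hl0 : lam ‖h (z s)‖ = 0 → l ‖h (z s)‖ = 0 := fun h0 =>
      le_antisymm ((hle _ (norm_nonneg _)).trans h0.le) (hl.nonneg (norm_nonneg _))
    simp only [closedLoop, ← heq hs, smul_smul, mul_div_cancel_of_imp' hl0]

theorem IsTrajectoryOn.exists_extension_closedLoop [FiniteDimensional ℝ E]
    (hz : IsTrajectoryOn (closedLoop f h lam) d ξ z T) (hd : IsBoundedSignal 1 d)
    (hσ : IsBIBSGain f σ) (hf : LocallyLipschitz fun q : E × U => f q.1 q.2) (hh : Continuous h)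
    (hlam : IsClassK lam) :
    ∃ d' z', IsBoundedSignal 1 d' ∧ z' T = z T ∧
      ∀ S, 0 ≤ S → IsTrajectoryOn (closedLoop f h lam) d' ξ z' S := by
  have hzero (C : ℝ) (hC : 0 ≤ C) : IsBoundedSignal C fun _ => (0 : U) := .const (by simpa)
  obtain ⟨y, hy⟩ := exists_forall_isTrajectoryOn (ξ := z T) hf (hzero 0 le_rfl)
    fun y S hy => hσ.norm_le le_rfl (hzero 0 le_rfl) hy
  have hy' (S : ℝ) (hS : 0 ≤ S) : IsTrajectoryOn (closedLoop f h lam) (fun _ => 0) (z T) y S :=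
    (hy S hS).congr (fun _ _ => rfl) fun s _ => by simp only [closedLoop, smul_zero]
  refine ⟨_root_.concatAt T d fun _ => 0, _root_.concatAt T z y,
    hd.concatAt (hzero 1 zero_le_one) T, concatAt_of_le le_rfl, fun S hS => ?_⟩
  exact (IsTrajectoryOn.concatAt (continuous_closedLoop hf.continuous hh hlam) hd
    (hzero 1 zero_le_one) hz (hy' S hS)).mono hS (by linarith [hz.nonneg])

end ClosedLoop

section Notions

variable {E D : Type*} [NormedAddCommGroup E] [NormedSpace ℝ E] [NormedAddCommGroup D]
  [MeasurableSpace D] {H : E × D → E} {o : E → ℝ} {β : ℝ → ℝ → ℝ} {ρ : ℝ → ℝ}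

/-- Uniform output stability of `ż = H(z,w)` with output `o` and disturbances bounded by `1`: the
output decays at the class-`KL` rate `β` while the state stays bounded by `ρ` of its initial norm.
-/
structure IsUniformlyOutputStable (H : E × D → E) (o : E → ℝ) (β : ℝ → ℝ → ℝ) (ρ : ℝ → ℝ) :
    Prop where
  isClassKL : IsClassKL β
  isClassK : IsClassK ρ
  output_le : ∀ ⦃ξ w z T⦄, IsBoundedSignal 1 w → IsTrajectoryOn H w ξ z T → o (z T) ≤ β ‖ξ‖ T
  norm_le : ∀ ⦃ξ w z T⦄, IsBoundedSignal 1 w → IsTrajectoryOn H w ξ z T → ‖z T‖ ≤ ρ ‖ξ‖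

/-- The decay rates allowed in a Lyapunov inequality: class `K` in the first argument (the value of
the Lyapunov function) and nonincreasing in the second one (the norm of the state). -/
structure IsDecayRate (α : ℝ → ℝ → ℝ) : Prop where
  isClassK : ∀ r, 0 ≤ r → IsClassK fun s => α s r
  antitoneOn : ∀ s, 0 ≤ s → AntitoneOn (fun r => α s r) (Ici 0)

/-- The counterpart of `IsROSLyapunov` for a system `ż = H(z,w)` with output `o` and disturbances
bounded by `1`, the decay being required for all of these disturbances. -/
structure IsOutputLyapunov (H : E × D → E) (o V : E → ℝ) : Prop where
  contDiff : ContDiff ℝ (⊤ : ℕ∞) V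
  nonneg : ∀ ξ, 0 ≤ V ξ
  exists_bounds : ∃ α₁ α₂ : ℝ → ℝ, IsClassKInfty α₁ ∧ IsClassKInfty α₂ ∧
    ∀ ξ, α₁ (o ξ) ≤ V ξ ∧ V ξ ≤ α₂ ‖ξ‖
  exists_decay : ∃ α, IsDecayRate α ∧
    ∀ ξ v, ‖v‖ ≤ 1 → fderiv ℝ V ξ (H (ξ, v)) ≤ -α (V ξ) ‖ξ‖

end Notions

section System

variable {n m p : ℕ}
  {f : EuclideanSpace ℝ (Fin n) → EuclideanSpace ℝ (Fin m) → EuclideanSpace ℝ (Fin n)}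
  {h : EuclideanSpace ℝ (Fin n) → EuclideanSpace ℝ (Fin p)}
  {x : ℝ → EuclideanSpace ℝ (Fin n) → (ℝ → EuclideanSpace ℝ (Fin m)) → EuclideanSpace ℝ (Fin n)}
  {u d : ℝ → EuclideanSpace ℝ (Fin m)} {l : ℝ → ℝ} {C : ℝ}

theorem IsBoundedSignal.isInput (hu : IsBoundedSignal C u) : IsInput u :=
  ⟨hu.measurable, fun _ _ => ⟨C, ae_of_all _ hu.norm_le⟩⟩

theorem IsBoundedSignal.isDisturbance (hd : IsBoundedSignal 1 d) : IsDisturbance d :=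
  ⟨hd.measurable, ae_of_all _ hd.norm_le⟩

theorem IsBoundedSignal.uNormE_le (hu : IsBoundedSignal C u) : uNormE u ≤ ENNReal.ofReal C := by
  refine essSup_le_of_ae_le _ (ae_of_all _ fun s => ?_)
  change ‖u s‖ₑ ≤ ENNReal.ofReal C
  rw [← ofReal_norm]
  exact ENNReal.ofReal_le_ofReal (hu.norm_le s)

theorem IsBIBS.exists_isBIBSGain (hB : IsBIBS f x)
    (hf : LocallyLipschitz fun q : EuclideanSpace ℝ (Fin n) × EuclideanSpace ℝ (Fin m) =>
      f q.1 q.2) : ∃ σ, IsBIBSGain f σ := by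
  obtain ⟨hx, σ, hσ, hb⟩ := hB
  refine ⟨σ, hσ, fun C ξ u z T hC hu hz => ?_⟩
  have hbdd : BddInput u := ne_top_of_le_ne_top ENNReal.ofReal_ne_top hu.uNormE_le
  have hxT : IsTrajectoryOn (fun q => f q.1 q.2) u ξ (fun t => x t ξ u) T :=
    isTrajectoryOn_of_forall_eq hf.continuous hu (hx ξ u hu.isInput)
      (fun T hT => hb ξ u hu.isInput hbdd T hT.nonneg) hz.nonneg
  rw [hz.eqOn hf hu hxT ⟨hz.nonneg, le_rfl⟩]
  refine (hb ξ u hu.isInput hbdd T hz.nonneg).trans (max_le_max le_rfl ?_)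
  exact hσ.mono ENNReal.toReal_nonneg (ENNReal.toReal_le_of_le_ofReal hC hu.uNormE_le)

/-- A disturbance may be modified on the null set where its norm exceeds `1`. -/
theorem IsDisturbance.exists_isBoundedSignal (hd : IsDisturbance d)
    (f : EuclideanSpace ℝ (Fin n) → EuclideanSpace ℝ (Fin m) → EuclideanSpace ℝ (Fin n))
    (h : EuclideanSpace ℝ (Fin n) → EuclideanSpace ℝ (Fin p)) (lam : ℝ → ℝ) :
    ∃ d', IsBoundedSignal 1 d' ∧ ∀ ξ z,
      SolvesClosedLoop f h lam ξ d z ↔ SolvesClosedLoop f h lam ξ d' z := by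
  refine ⟨fun s => if ‖d s‖ ≤ 1 then d s else 0, ⟨?_, fun s => ?_⟩, fun ξ z =>
    forall₂_congr fun t ht => ?_⟩
  · exact Measurable.ite (measurableSet_le hd.1.norm measurable_const) hd.1 measurable_const
  · split_ifs with hs
    · exact hs
    · simp
  · have : ∫ s in (0:ℝ)..t, f (z s) (lam ‖h (z s)‖ • d s)
        = ∫ s in (0:ℝ)..t, f (z s) (lam ‖h (z s)‖ • if ‖d s‖ ≤ 1 then d s else 0) := by
      refine intervalIntegral.integral_congr_ae ?_
      filter_upwards [(ae_restrict_iff' measurableSet_Ici).1 hd.2] with s hs hst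
      rw [uIoc_of_le ht] at hst
      rw [if_pos (hs hst.1.le)]
    rw [this]

theorem IsROS.exists_isUniformlyOutputStable (hR : IsROS f h)
    (hf : LocallyLipschitz fun q : EuclideanSpace ℝ (Fin n) × EuclideanSpace ℝ (Fin m) =>
      f q.1 q.2) (hh : Continuous h) (hB : IsBIBS f x) :
    ∃ l β ρ, IsClassKInfty l ∧ LipschitzWith 1 l ∧
      IsUniformlyOutputStable (closedLoop f h l) (fun ξ => ‖h ξ‖) β ρ := by
  obtain ⟨lam, β, hlam, -, hβ, -, hest⟩ := hR
  obtain ⟨σ, hσ⟩ := hB.exists_isBIBSGain hf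
  obtain ⟨l, hl, -, hlip, hle⟩ := hlam.exists_contDiffOn_lipschitzWith_le
  have hout : ∀ ξ d z T, IsBoundedSignal 1 d → IsTrajectoryOn (closedLoop f h l) d ξ z T →
      ‖h (z T)‖ ≤ β ‖ξ‖ T := by
    intro ξ d z T hd hz
    obtain ⟨d', hd', hz'⟩ := hz.exists_closedLoop_of_gain_le hd hh hl.1 hlam.1 hle
    obtain ⟨d₁, z₁, hd₁, hT, hz₁⟩ := hz'.exists_extension_closedLoop hd' hσ hf hh hlam.1
    have hsol : SolvesClosedLoop f h lam ξ d₁ z₁ := fun t ht =>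
      (hz₁ t ht).eq_add_integral t ⟨ht, le_rfl⟩
    exact hT ▸ hest ξ d₁ z₁ hd₁.isDisturbance hsol T hz.nonneg
  obtain ⟨ρ, hρ, hstate⟩ := hσ.exists_norm_le hh hl.1 (hβ.1 0 self_mem_Ici) fun ξ d z T hd hz =>
    (hout ξ d z T hd hz).trans
      ((hβ.2 _ (norm_nonneg ξ)).1 self_mem_Ici hz.nonneg hz.nonneg)
  exact ⟨l, β, ρ, hl, hlip, hβ, hρ, fun ξ d z T => hout ξ d z T, fun ξ d z T => hstate ξ d z T⟩

theorem IsUniformlyOutputStable.isROS {β : ℝ → ℝ → ℝ} {ρ : ℝ → ℝ}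
    (hest : IsUniformlyOutputStable (closedLoop f h l) (fun ξ => ‖h ξ‖) β ρ)
    (hH : LocallyLipschitz (closedLoop f h l)) (hl : IsClassKInfty l)
    (hsmooth : ContDiffOn ℝ (⊤ : ℕ∞) l (Ioi 0)) : IsROS f h := by
  refine ⟨l, β, hl, hsmooth, hest.isClassKL, fun ξ d hd => ?_, fun ξ d z hd hz t ht => ?_⟩
  all_goals obtain ⟨d', hd', hiff⟩ := hd.exists_isBoundedSignal f h l
  · obtain ⟨z, hz⟩ := exists_forall_isTrajectoryOn hH hd' fun z T hz => hest.norm_le (ξ := ξ) hd' hz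
    exact ⟨z, (hiff ξ z).2 fun t ht => (hz t ht).eq_add_integral t ⟨ht, le_rfl⟩⟩
  · exact hest.output_le hd' (isTrajectoryOn_of_forall_eq hH.continuous hd' ((hiff ξ z).1 hz)
      (fun T hz => hest.norm_le hd' hz) ht)

theorem IsROSLyapunov.exists_isOutputLyapunov {V : EuclideanSpace ℝ (Fin n) → ℝ}
    (hV : IsROSLyapunov f h V) :
    ∃ l, IsClassKInfty l ∧ ContDiffOn ℝ (⊤ : ℕ∞) l (Ioi 0) ∧ LipschitzWith 1 l ∧
      IsOutputLyapunov (closedLoop f h l) (fun ξ => ‖h ξ‖) V := by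
  obtain ⟨hsmooth, hnonneg, hbounds, χ, hχ, α₃, hα₃, hα₃anti, hdecay⟩ := hV
  have hκ := isClassKInfty_add_id hχ.1 hχ.monotoneOn hχ.2.2
  obtain ⟨e, he0, heκ⟩ := hκ.exists_orderIso
  have hκinv : IsClassKInfty e.symm := .of_orderIso (e.symm_apply_eq.2 he0.symm)
  obtain ⟨l, hl, hlsmooth, hlip, hle⟩ := hκinv.exists_contDiffOn_lipschitzWith_le
  have hχl {r s : ℝ} (hr : 0 ≤ r) (hs : 0 ≤ s) (hrs : r ≤ l s) : χ r ≤ s :=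
    calc χ r ≤ χ r + r := le_add_of_nonneg_right hr
      _ = e r := (heκ hr).symm
      _ ≤ s := e.le_symm_apply.1 (hrs.trans (hle s hs))
  refine ⟨l, hl, hlsmooth, hlip, hsmooth, hnonneg, hbounds, α₃, ⟨hα₃, hα₃anti⟩, fun ξ v hv => ?_⟩
  exact hdecay ξ (l ‖h ξ‖ • v) (hχl (norm_nonneg _) (norm_nonneg _)
    (norm_smul_le_of_norm_le_one hl.1 (norm_nonneg _) hv))

theorem IsOutputLyapunov.isROSLyapunov {V : EuclideanSpace ℝ (Fin n) → ℝ}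
    (hV : IsOutputLyapunov (closedLoop f h l) (fun ξ => ‖h ξ‖) V) (hl : IsClassKInfty l) :
    IsROSLyapunov f h V := by
  obtain ⟨α, hα, hdecay⟩ := hV.exists_decay
  obtain ⟨e, he0, hel⟩ := hl.exists_orderIso
  have hinv : IsClassKInfty e.symm := .of_orderIso (e.symm_apply_eq.2 he0.symm)
  refine ⟨hV.contDiff, hV.nonneg, hV.exists_bounds, e.symm, hinv.1, α, hα.isClassK, hα.antitoneOn,
    fun ξ μ hμ => ?_⟩
  have hμl : ‖μ‖ ≤ l ‖h ξ‖ := hel (norm_nonneg (h ξ)) ▸ e.symm_apply_le.1 hμ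
  obtain ⟨d, hd, rfl⟩ : ∃ d, ‖d‖ ≤ 1 ∧ l ‖h ξ‖ • d = μ := by
    rcases eq_or_lt_of_le ((norm_nonneg μ).trans hμl) with h0 | h0
    · rw [← h0, norm_le_zero_iff] at hμl
      exact ⟨0, by simp, by simp [hμl]⟩
    · refine ⟨(l ‖h ξ‖)⁻¹ • μ, ?_, smul_inv_smul₀ h0.ne' μ⟩
      rwa [norm_smul, norm_inv, Real.norm_of_nonneg h0.le, inv_mul_le_one₀ h0]
  exact hdecay ξ d hd

end System

/-! ### A Lyapunov function implies robust output stability -/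

section LyapunovSufficient

variable {E D : Type*} [NormedAddCommGroup E] [NormedSpace ℝ E] [ProperSpace E]
  [NormedAddCommGroup D] [ProperSpace D] [MeasurableSpace D] [BorelSpace D]
  {H : E × D → E} {o V : E → ℝ} {ρ : ℝ → ℝ}

namespace IsOutputLyapunov

theorem apply_le_apply (hV : IsOutputLyapunov H o V) (hH : Continuous H) {w : ℝ → D} {ξ : E}
    {z : ℝ → E} {a b T : ℝ} (hw : IsBoundedSignal 1 w) (hz : IsTrajectoryOn H w ξ z T)
    (ha : 0 ≤ a) (hab : a ≤ b) (hbT : b ≤ T) : V (z b) ≤ V (z a) := by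
  obtain ⟨α, hα, hdecay⟩ := hV.exists_decay
  have hneg (s : ℝ) : fderiv ℝ V (z s) (H (z s, w s)) ≤ -0 :=
    (hdecay _ _ (hw.norm_le s)).trans
      (neg_le_neg ((hα.isClassK _ (norm_nonneg _)).nonneg (hV.nonneg _)))
  simpa using hz.lyapunov_le hH hw (hV.contDiff.of_le (by simp)) ha hab hbT fun s _ => hneg s

theorem exists_output_le (hV : IsOutputLyapunov H o V) (hH : Continuous H) (ho : ∀ ξ, 0 ≤ o ξ) :
    ∃ b, IsClassK b ∧ ∀ ξ w z T, IsBoundedSignal 1 w → IsTrajectoryOn H w ξ z T →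
      o (z T) ≤ b ‖ξ‖ := by
  obtain ⟨α₁, α₂, hα₁, hα₂, hbounds⟩ := hV.exists_bounds
  obtain ⟨e, he0, heα₁⟩ := hα₁.exists_orderIso
  have hinv : IsClassKInfty e.symm := .of_orderIso (e.symm_apply_eq.2 he0.symm)
  refine ⟨_, hinv.1.comp hα₂.1, fun ξ w z T hw hz => e.le_symm_apply.2 ?_⟩
  calc e (o (z T)) = α₁ (o (z T)) := heα₁ (ho _)
    _ ≤ V (z T) := (hbounds _).1
    _ ≤ V (z 0) := hV.apply_le_apply hH hw hz le_rfl hz.nonneg le_rfl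
    _ ≤ α₂ ‖ξ‖ := hz.apply_zero ▸ (hbounds _).2

/-- As long as the output exceeds `ε`, the Lyapunov function exceeds `α₁ ε`, so it decreases at a
rate bounded away from zero on the compact set to which the state is confined. -/
theorem exists_time_output_le (hV : IsOutputLyapunov H o V) (hH : Continuous H) (hρ : IsClassK ρ)
    (hstate : ∀ ξ w z T, IsBoundedSignal 1 w → IsTrajectoryOn H w ξ z T → ‖z T‖ ≤ ρ ‖ξ‖)
    (r : ℝ) {ε : ℝ} (hε : 0 < ε) :
    ∃ τ, ∀ ξ w z T, IsBoundedSignal 1 w → IsTrajectoryOn H w ξ z T → ‖ξ‖ ≤ r → τ ≤ T →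
      o (z T) ≤ ε := by
  obtain ⟨α₁, α₂, hα₁, hα₂, hbounds⟩ := hV.exists_bounds
  obtain ⟨α, hα, hdecay⟩ := hV.exists_decay
  rcases lt_or_ge r 0 with hr | hr
  · exact ⟨0, fun ξ _ _ _ _ _ hξ => absurd hξ (hr.trans_le (norm_nonneg ξ)).not_ge⟩
  set c := α (α₁ ε) (ρ r)
  have hα₁ε : 0 < α₁ ε := hα₁.1.pos hε
  have hc : 0 < c := (hα.isClassK _ (hρ.nonneg hr)).pos hα₁ε
  refine ⟨α₂ r / c, fun ξ w z T hw hz hξ hτ => ?_⟩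
  by_contra! hbad
  have hVT : α₁ ε ≤ V (z T) := (hα₁.1.mono hε.le hbad.le).trans (hbounds _).1
  have hrate : ∀ s ∈ Icc 0 T, fderiv ℝ V (z s) (H (z s, w s)) ≤ -c := by
    intro s hs
    have hnorm : ‖z s‖ ≤ ρ r :=
      (hstate _ _ _ _ hw (hz.mono hs.1 hs.2)).trans (hρ.mono (norm_nonneg _) hξ)
    have hVs : α₁ ε ≤ V (z s) := hVT.trans (hV.apply_le_apply hH hw hz hs.1 hs.2 le_rfl)
    calc fderiv ℝ V (z s) (H (z s, w s)) ≤ -α (V (z s)) ‖z s‖ := hdecay _ _ (hw.norm_le s)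
      _ ≤ -α (α₁ ε) ‖z s‖ := neg_le_neg ((hα.isClassK _ (norm_nonneg _)).mono hα₁ε.le hVs)
      _ ≤ -c := neg_le_neg (hα.antitoneOn _ hα₁ε.le (norm_nonneg _) (hρ.nonneg hr) hnorm)
  have hV0 : V (z 0) ≤ α₂ r :=
    hz.apply_zero ▸ (hbounds ξ).2.trans (hα₂.1.mono (norm_nonneg _) hξ)
  have hlyap := hz.lyapunov_le hH hw (hV.contDiff.of_le (by simp)) le_rfl hz.nonneg le_rfl hrate
  rw [div_le_iff₀' hc] at hτ
  linarith

theorem exists_isUniformlyOutputStable (hV : IsOutputLyapunov H o V) (hH : Continuous H)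
    (ho : ∀ ξ, 0 ≤ o ξ) (hρ : IsClassK ρ)
    (hstate : ∀ ξ w z T, IsBoundedSignal 1 w → IsTrajectoryOn H w ξ z T → ‖z T‖ ≤ ρ ‖ξ‖) :
    ∃ β, IsUniformlyOutputStable H o β ρ := by
  obtain ⟨b, hb, hout⟩ := hV.exists_output_le hH ho
  let ι := {q : E × (ℝ → D) × (ℝ → E) × ℝ //
    IsBoundedSignal 1 q.2.1 ∧ IsTrajectoryOn H q.2.1 q.1 q.2.2.1 q.2.2.2}
  obtain ⟨β, hβ, hle⟩ := exists_isClassKL_of_uniformlyAttractive (ι := ι) (s := fun q => ‖q.1.1‖)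
    (y := fun q => o (q.1.2.2.1 q.1.2.2.2)) (t := fun q => q.1.2.2.2) hb (fun _ => norm_nonneg _)
    (fun _ => ho _) (fun q => hout _ _ _ _ q.2.1 q.2.2) fun r ε hε => by
      obtain ⟨τ, hτ⟩ := hV.exists_time_output_le hH hρ hstate r hε
      exact ⟨τ, fun q => hτ _ _ _ _ q.2.1 q.2.2⟩
  exact ⟨β, hβ, hρ, fun ξ w z T hw hz => hle ⟨(ξ, w, z, T), hw, hz⟩,
    fun ξ w z T => hstate ξ w z T⟩

end IsOutputLyapunov

end LyapunovSufficient

theorem IsROSLyapunov.isROS {n m p : ℕ}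
    {f : EuclideanSpace ℝ (Fin n) → EuclideanSpace ℝ (Fin m) → EuclideanSpace ℝ (Fin n)}
    {h : EuclideanSpace ℝ (Fin n) → EuclideanSpace ℝ (Fin p)}
    {x : ℝ → EuclideanSpace ℝ (Fin n) → (ℝ → EuclideanSpace ℝ (Fin m)) → EuclideanSpace ℝ (Fin n)}
    {V : EuclideanSpace ℝ (Fin n) → ℝ} (hV : IsROSLyapunov f h V)
    (hf : LocallyLipschitz fun q : EuclideanSpace ℝ (Fin n) × EuclideanSpace ℝ (Fin m) =>
      f q.1 q.2) (hh : LocallyLipschitz h) (hB : IsBIBS f x) : IsROS f h := by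
  obtain ⟨l, hl, hsmooth, hlip, hVl⟩ := hV.exists_isOutputLyapunov
  obtain ⟨σ, hσ⟩ := hB.exists_isBIBSGain hf
  have hH := locallyLipschitz_closedLoop hf hh hlip
  obtain ⟨b, hb, hout⟩ := hVl.exists_output_le hH.continuous fun _ => norm_nonneg _
  obtain ⟨ρ, hρ, hstate⟩ := hσ.exists_norm_le hh.continuous hl.1 hb hout
  obtain ⟨β, hest⟩ :=
    hVl.exists_isUniformlyOutputStable hH.continuous (fun _ => norm_nonneg _) hρ hstate
  exact hest.isROS hH hl hsmooth

/-! ### The value function of the output -/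

section ValueFunction

variable {E D : Type*} [NormedAddCommGroup E] [NormedSpace ℝ E] [NormedAddCommGroup D]
  [MeasurableSpace D] {H : E × D → E} {o : E → ℝ} {β : ℝ → ℝ → ℝ} {ρ : ℝ → ℝ} {ε R T : ℝ}
  {ξ : E} {w : ℝ → D} {z : ℝ → E} {v : D}

/-- The largest excess of the output `o` over the level `ε` along the trajectories of `ż = H(z,w)`,
`|w| ≤ 1`, that start at `ξ`. The weight `eᵗ` on the excess at time `t` makes it decay at the rate
`e⁻ᵗ` along trajectories. -/
def valueFunction (H : E × D → E) (o : E → ℝ) (ε : ℝ) (ξ : E) : ℝ :=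
  sSup {y | ∃ w z t, IsBoundedSignal 1 w ∧ IsTrajectoryOn H w ξ z t ∧
    y = max (o (z t) - ε) 0 * Real.exp t}

theorem valueFunction_nonneg : 0 ≤ valueFunction H o ε ξ := by
  refine Real.sSup_nonneg ?_
  rintro y ⟨w, z, t, -, -, rfl⟩
  positivity

theorem valueFunction_le {b : ℝ} (hb : 0 ≤ b) (h : ∀ w z t, IsBoundedSignal 1 w →
    IsTrajectoryOn H w ξ z t → max (o (z t) - ε) 0 * Real.exp t ≤ b) :
    valueFunction H o ε ξ ≤ b := by
  refine Real.sSup_le ?_ hb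
  rintro y ⟨w, z, t, hw, hz, rfl⟩
  exact h w z t hw hz

namespace IsUniformlyOutputStable

theorem output_le_of_norm_le (hest : IsUniformlyOutputStable H o β ρ) (hw : IsBoundedSignal 1 w)
    (hz : IsTrajectoryOn H w ξ z T) (hξ : ‖ξ‖ ≤ R) {s : ℝ} (hs : 0 ≤ s) (hsT : s ≤ T) :
    o (z T) ≤ β R s :=
  have hR : 0 ≤ R := (norm_nonneg _).trans hξ
  calc o (z T) ≤ β ‖ξ‖ T := hest.output_le hw hz
    _ ≤ β R T := (hest.isClassKL.1 T hz.nonneg).mono (norm_nonneg _) hξ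
    _ ≤ β R s := (hest.isClassKL.2 R hR).1 hs hz.nonneg hsT

theorem exists_time_output_le (hest : IsUniformlyOutputStable H o β ρ) (hR : 0 ≤ R) (hε : 0 < ε) :
    ∃ τ, ∀ ξ w z T, ‖ξ‖ ≤ R → IsBoundedSignal 1 w → IsTrajectoryOn H w ξ z T → τ ≤ T →
      o (z T) ≤ ε := by
  obtain ⟨τ, hτ, hτ0⟩ := (((hest.isClassKL.2 R hR).2.eventually_lt_const hε).and
    (eventually_ge_atTop 0)).exists
  exact ⟨τ, fun ξ w z T hξ hw hz hτT =>
    (hest.output_le_of_norm_le hw hz hξ hτ0 hτT).trans hτ.le⟩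

theorem exists_excess_le (hest : IsUniformlyOutputStable H o β ρ) (hR : 0 ≤ R) (hε : 0 < ε) :
    ∃ B, ∀ ξ w z t, ‖ξ‖ ≤ R → IsBoundedSignal 1 w → IsTrajectoryOn H w ξ z t →
      max (o (z t) - ε) 0 * Real.exp t ≤ B := by
  obtain ⟨τ, hτ⟩ := hest.exists_time_output_le hR hε
  have hβR : 0 ≤ β R 0 := (hest.isClassKL.1 0 self_mem_Ici).nonneg hR
  refine ⟨β R 0 * Real.exp τ, fun ξ w z t hξ hw hz => ?_⟩
  rcases le_total t τ with htτ | htτ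
  · gcongr
    exact max_le (by linarith [hest.output_le_of_norm_le hw hz hξ le_rfl hz.nonneg]) hβR
  · rw [max_eq_right (sub_nonpos.2 (hτ ξ w z t hξ hw hz htτ)), zero_mul]
    positivity

theorem le_valueFunction (hest : IsUniformlyOutputStable H o β ρ) (hε : 0 < ε)
    (hw : IsBoundedSignal 1 w) (hz : IsTrajectoryOn H w ξ z T) :
    max (o (z T) - ε) 0 * Real.exp T ≤ valueFunction H o ε ξ := by
  obtain ⟨B, hB⟩ := hest.exists_excess_le (norm_nonneg ξ) hε
  refine le_csSup ⟨B, ?_⟩ ⟨w, z, T, hw, hz, rfl⟩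
  rintro y ⟨w, z, t, hw, hz, rfl⟩
  exact hB ξ w z t le_rfl hw hz

theorem sub_le_valueFunction (hest : IsUniformlyOutputStable H o β ρ) (hε : 0 < ε) (ξ : E) :
    o ξ - ε ≤ valueFunction H o ε ξ := by
  have hzero : IsBoundedSignal 1 fun _ => (0 : D) := .const (by simp)
  have := hest.le_valueFunction hε hzero (isTrajectoryOn_zero (ξ := ξ))
  rw [Real.exp_zero, mul_one] at this
  exact (le_max_left _ _).trans this

theorem valueFunction_zero (hest : IsUniformlyOutputStable H o β ρ) (hε : 0 < ε) :
    valueFunction H o ε 0 = 0 := by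
  refine le_antisymm (valueFunction_le le_rfl fun w z t hw hz => ?_) valueFunction_nonneg
  have hout := hest.output_le hw hz
  rw [norm_zero, show β 0 t = 0 from (hest.isClassKL.1 t hz.nonneg).2.2] at hout
  rw [max_eq_right (by linarith), zero_mul]

variable [ProperSpace D] [BorelSpace D]

theorem valueFunction_le_exp_neg_mul [ProperSpace E] (hest : IsUniformlyOutputStable H o β ρ)
    (hε : 0 < ε) (hH : Continuous H) (hw : IsBoundedSignal 1 w) (hz : IsTrajectoryOn H w ξ z T) :
    valueFunction H o ε (z T) ≤ Real.exp (-T) * valueFunction H o ε ξ := by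
  refine valueFunction_le (mul_nonneg (Real.exp_pos _).le valueFunction_nonneg)
    fun w₁ z₁ t hw₁ hz₁ => ?_
  have hconcat := hest.le_valueFunction hε (hw.concatAt hw₁ T) (.concatAt hH hw hw₁ hz hz₁)
  rw [concatAt_of_ge hz₁ (le_add_of_nonneg_right hz₁.nonneg), add_sub_cancel_left,
    Real.exp_add] at hconcat
  rw [Real.exp_neg, inv_mul_eq_div, le_div_iff₀ (Real.exp_pos _)]
  linarith

variable [FiniteDimensional ℝ E]

theorem exists_forall_isTrajectoryOn (hest : IsUniformlyOutputStable H o β ρ)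
    (hH : LocallyLipschitz H) (hw : IsBoundedSignal 1 w) (ξ : E) :
    ∃ z, ∀ T, 0 ≤ T → IsTrajectoryOn H w ξ z T :=
  _root_.exists_forall_isTrajectoryOn hH hw fun _ _ hz => hest.norm_le hw hz

theorem exists_output_le_add_mul (hest : IsUniformlyOutputStable H o β ρ)
    (hH : LocallyLipschitz H) (ho : LocallyLipschitz o) (R τ : ℝ) :
    ∃ L, 0 ≤ L ∧ ∀ ξ ξ' w z z' T, ‖ξ‖ ≤ R → ‖ξ'‖ ≤ R → IsBoundedSignal 1 w →
      IsTrajectoryOn H w ξ z T → IsTrajectoryOn H w ξ' z' T → T ≤ τ →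
      o (z T) ≤ o (z' T) + L * ‖ξ - ξ'‖ := by
  obtain ⟨K, hK0, hK⟩ := exists_norm_sub_le_of_locallyLipschitz hH (ρ R) 1
  obtain ⟨L, hL⟩ := LocallyLipschitzOn.exists_lipschitzOnWith_of_compact
    (isCompact_closedBall (0 : E) (ρ R)) ho.locallyLipschitzOn
  refine ⟨L * Real.exp (K * τ), by positivity, fun ξ ξ' w z z' T hξ hξ' hw hz hz' hT => ?_⟩
  have hstate {ξ z} (hξ : ‖ξ‖ ≤ R) (hz : IsTrajectoryOn H w ξ z T) (s : ℝ) (hs : s ∈ Icc 0 T) :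
      ‖z s‖ ≤ ρ R :=
    (hest.norm_le hw (hz.mono hs.1 hs.2)).trans (hest.isClassK.mono (norm_nonneg _) hξ)
  have hTmem : T ∈ Icc 0 T := ⟨hz.nonneg, le_rfl⟩
  have hdist : ‖z T - z' T‖ ≤ ‖ξ - ξ'‖ * Real.exp (K * τ) :=
    (hz.norm_sub_le hH.continuous hw hK0 hK hz' (hstate hξ hz) (hstate hξ' hz') T hTmem).trans
      (by gcongr)
  have hout := hL.norm_sub_le (x := z T) (y := z' T) (by simpa using hstate hξ hz T hTmem)
    (by simpa using hstate hξ' hz' T hTmem)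
  have := (le_abs_self _).trans (hout.trans (mul_le_mul_of_nonneg_left hdist L.2))
  linarith

theorem exists_valueFunction_le_add_mul (hest : IsUniformlyOutputStable H o β ρ) (hε : 0 < ε)
    (hH : LocallyLipschitz H) (ho : LocallyLipschitz o) (hR : 0 ≤ R) :
    ∃ L, 0 ≤ L ∧ ∀ ξ ξ', ‖ξ‖ ≤ R → ‖ξ'‖ ≤ R →
      valueFunction H o ε ξ ≤ valueFunction H o ε ξ' + L * ‖ξ - ξ'‖ := by
  obtain ⟨τ, hτ⟩ := hest.exists_time_output_le hR hε
  obtain ⟨L, hL0, hL⟩ := hest.exists_output_le_add_mul hH ho R τ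
  refine ⟨L * Real.exp τ, by positivity, fun ξ ξ' hξ hξ' => ?_⟩
  have hnonneg : 0 ≤ valueFunction H o ε ξ' + L * Real.exp τ * ‖ξ - ξ'‖ :=
    add_nonneg valueFunction_nonneg (by positivity)
  refine valueFunction_le hnonneg fun w z t hw hz => ?_
  rcases le_total t τ with htτ | htτ
  · obtain ⟨z', hz'⟩ := hest.exists_forall_isTrajectoryOn hH hw ξ'
    have hout := hL ξ ξ' w z z' t hξ hξ' hw hz (hz' t hz.nonneg) htτ
    have hexcess : max (o (z t) - ε) 0 ≤ max (o (z' t) - ε) 0 + L * ‖ξ - ξ'‖ :=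
      max_le (by linarith [le_max_left (o (z' t) - ε) 0]) (by positivity)
    calc max (o (z t) - ε) 0 * Real.exp t
        ≤ (max (o (z' t) - ε) 0 + L * ‖ξ - ξ'‖) * Real.exp t := by gcongr
      _ = max (o (z' t) - ε) 0 * Real.exp t + L * Real.exp t * ‖ξ - ξ'‖ := by ring
      _ ≤ valueFunction H o ε ξ' + L * Real.exp τ * ‖ξ - ξ'‖ := by
        gcongr
        exact hest.le_valueFunction hε hw (hz' t hz.nonneg)
  · rwa [max_eq_right (sub_nonpos.2 (hτ ξ w z t hξ hw hz htτ)), zero_mul]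

theorem locallyLipschitz_valueFunction (hest : IsUniformlyOutputStable H o β ρ) (hε : 0 < ε)
    (hH : LocallyLipschitz H) (ho : LocallyLipschitz o) :
    LocallyLipschitz (valueFunction H o ε) := by
  intro ξ
  obtain ⟨L, hL0, hL⟩ :=
    hest.exists_valueFunction_le_add_mul hε hH ho (R := ‖ξ‖ + 1) (by positivity)
  refine ⟨⟨L, hL0⟩, Metric.closedBall 0 (‖ξ‖ + 1), ?_, LipschitzOnWith.of_le_add_mul _ ?_⟩
  · exact Metric.closedBall_mem_nhds_of_mem (by simp)
  · intro x hx y hy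
    rw [dist_eq_norm]
    exact hL x y (by simpa using hx) (by simpa using hy)

end IsUniformlyOutputStable

/-- The decay along the trajectory with constant disturbance `v` shows that
`t ↦ e⁻ᵗ U(ξ) - U(z(t)) ≥ 0` has a minimum at `t = 0`. -/
theorem IsUniformlyOutputStable.fderiv_valueFunction_le [FiniteDimensional ℝ E] [ProperSpace D]
    [BorelSpace D] (hest : IsUniformlyOutputStable H o β ρ) (hε : 0 < ε) (hH : LocallyLipschitz H)
    (hd : DifferentiableAt ℝ (valueFunction H o ε) ξ) (hv : ‖v‖ ≤ 1) :
    fderiv ℝ (valueFunction H o ε) ξ (H (ξ, v)) ≤ -valueFunction H o ε ξ := by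
  have hw : IsBoundedSignal 1 fun _ => v := .const hv
  obtain ⟨z, hz⟩ := hest.exists_forall_isTrajectoryOn hH hw ξ
  set U := valueFunction H o ε
  set φ : ℝ → ℝ := fun t => Real.exp (-t) * U ξ - U (z t)
  have hz0 : z 0 = ξ := (hz 0 le_rfl).apply_zero
  have hderiv : HasDerivWithinAt φ (-U ξ - fderiv ℝ U ξ (H (ξ, v))) (Ici 0) 0 := by
    have hexp : HasDerivWithinAt (fun t : ℝ => Real.exp (-t) * U ξ) (-U ξ) (Ici 0) 0 := by
      simpa using ((hasDerivAt_neg (0 : ℝ)).exp.mul_const (U ξ)).hasDerivWithinAt (s := Ici 0)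
    have hdz : HasFDerivAt U (fderiv ℝ U ξ) (z 0) := hz0 ▸ hd.hasFDerivAt
    exact hexp.sub (hdz.comp_hasDerivWithinAt 0
      ((hz 1 zero_le_one).hasDerivWithinAt_zero one_pos hH.continuous))
  have hmin : IsLocalMinOn φ (Ici 0) 0 := by
    filter_upwards [self_mem_nhdsWithin] with t ht
    simpa [φ, hz0] using hest.valueFunction_le_exp_neg_mul hε hH.continuous hw (hz t ht)
  have hcone : (1 : ℝ) ∈ posTangentConeAt (Ici 0) (0 : ℝ) :=
    one_mem_posTangentConeAt_iff_frequently.2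
      (Eventually.frequently (eventually_mem_nhdsWithin.mono fun _ ht => mem_Ici.2 ht.le))
  have := hmin.hasFDerivWithinAt_nonneg hderiv.hasFDerivWithinAt hcone
  rw [ContinuousLinearMap.toSpanSingleton_apply, one_smul] at this
  linarith

end ValueFunction
/-! ### Smoothing locally Lipschitz functions -/

section PositiveMinorant

variable {E : Type*} [NormedAddCommGroup E]

theorem exists_continuous_pos_le_of_norm_sub_le_one {δ : ℕ → ℝ} (hδ : ∀ n, 0 < δ n) :
    ∃ b : E → ℝ, Continuous b ∧ (∀ x, 0 < b x) ∧ ∀ x y, ‖y - x‖ ≤ 1 → b y ≤ δ ⌈‖x‖⌉₊ := by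
  let t : E → Set ℝ := fun y => Ioi 0 ∩ ⋂ x ∈ Metric.closedBall y 1, Iic (δ ⌈‖x‖⌉₊)
  have ht : ∀ y, Convex ℝ (t y) := fun y =>
    (convex_Ioi 0).inter (convex_iInter₂ fun _ _ => convex_Iic _)
  have hlocal : ∀ y, ∃ c, ∀ᶠ y' in 𝓝 y, c ∈ t y' := fun y => by
    obtain ⟨n, -, hn⟩ :=
      (Finset.range (⌈‖y‖ + 2⌉₊ + 1)).exists_min_image δ ⟨0, Finset.mem_range.2 (by omega)⟩
    refine ⟨δ n, ?_⟩
    filter_upwards [Metric.closedBall_mem_nhds y one_pos] with y' hy'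
    refine ⟨hδ n, mem_iInter₂.2 fun x hx => hn _ (Finset.mem_range_succ_iff.2 (Nat.ceil_mono ?_))⟩
    rw [mem_closedBall_iff_norm] at hx hy'
    linarith [norm_le_norm_add_norm_sub' x y', norm_le_norm_add_norm_sub' y' y]
  obtain ⟨b, hb⟩ := exists_continuous_forall_mem_convex_of_local_const ht hlocal
  refine ⟨b, b.continuous, fun x => (hb x).1, fun x y hxy => ?_⟩
  exact mem_iInter₂.1 (hb y).2 x (by rwa [mem_closedBall_iff_norm'])

variable [NormedSpace ℝ E] [FiniteDimensional ℝ E]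

theorem norm_fderiv_convolution_mollifier_le [MeasurableSpace E] [BorelSpace E] {μ : Measure E}
    [μ.IsAddHaarMeasure] {b : E → ℝ} (hb : Continuous b) {x : E} {r : ℝ}
    (hr : ∀ η, ‖η‖ ≤ 1 → |b (x - η)| ≤ r) :
    ‖fderiv ℝ (convolution (mollifier μ) b (ContinuousLinearMap.mul ℝ ℝ) μ) x‖ ≤
      (∫ η, ‖fderiv ℝ (mollifier μ) η‖ ∂μ) * r := by
  have hDψ : Integrable (fun η => ‖fderiv ℝ (mollifier μ) η‖) μ :=
    ((contDiff_mollifier.continuous_fderiv (by simp)).integrable_of_hasCompactSupport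
      (hasCompactSupport_mollifier.fderiv ℝ)).norm
  have hr0 : 0 ≤ r := (abs_nonneg _).trans (hr 0 (by simp))
  rw [(hasCompactSupport_mollifier.hasFDerivAt_convolution_left _
    (contDiff_mollifier.of_le (by simp)) hb.locallyIntegrable x).fderiv, ← integral_mul_const]
  refine norm_integral_le_of_norm_le (hDψ.mul_const r) (Eventually.of_forall fun η => ?_)
  by_cases hη : fderiv ℝ (mollifier μ) η = 0
  · simp [hη]
  · have hball : ‖η‖ ≤ 1 := by
      have := support_fderiv_subset ℝ (Function.mem_support.2 hη)
      rwa [tsupport, support_mollifier, closure_ball _ one_ne_zero,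
        mem_closedBall_zero_iff] at this
    refine ContinuousLinearMap.opNorm_le_bound _ (by positivity) fun v => ?_
    calc ‖fderiv ℝ (mollifier μ) η v * b (x - η)‖
        = ‖fderiv ℝ (mollifier μ) η v‖ * |b (x - η)| := norm_mul _ _
      _ ≤ ‖fderiv ℝ (mollifier μ) η‖ * ‖v‖ * r := by
          gcongr
          exacts [ContinuousLinearMap.le_opNorm _ v, hr η hball]
      _ = ‖fderiv ℝ (mollifier μ) η‖ * r * ‖v‖ := by ring

/-- Mollify a positive continuous function that is small on unit balls. -/
theorem exists_contDiff_pos_le {δ : ℕ → ℝ} (hδ : ∀ n, 0 < δ n) :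
    ∃ σ : E → ℝ, ContDiff ℝ (⊤ : ℕ∞) σ ∧
      ∀ x, 0 < σ x ∧ σ x ≤ δ ⌈‖x‖⌉₊ ∧ ‖fderiv ℝ σ x‖ ≤ δ ⌈‖x‖⌉₊ := by
  borelize E
  let μ : Measure E := Measure.addHaar
  let C : ℝ := ∫ η, ‖fderiv ℝ (mollifier μ) η‖ ∂μ
  have hC : 0 ≤ C := integral_nonneg fun _ => norm_nonneg _
  obtain ⟨b, hbc, hb0, hb⟩ := exists_continuous_pos_le_of_norm_sub_le_one (E := E)
    (δ := fun n => δ n / (1 + C)) fun n => by have := hδ n; positivity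
  have hbsub : ∀ x, Continuous fun η => b (x - η) := fun x => by fun_prop
  have hbx : ∀ x η : E, ‖η‖ ≤ 1 → b (x - η) ≤ δ ⌈‖x‖⌉₊ / (1 + C) := fun x η hη =>
    hb x _ (by simpa using hη)
  refine ⟨convolution (mollifier μ) b (ContinuousLinearMap.mul ℝ ℝ) μ,
    hasCompactSupport_mollifier.contDiff_convolution_left _ contDiff_mollifier
      hbc.locallyIntegrable, fun x => ⟨?_, ?_, ?_⟩⟩
  · exact (integral_mollifier_mul_const 0).symm.trans_lt
      (integral_mollifier_mul_lt continuous_const (hbsub x) fun η => hb0 (x - η))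
  · exact (integral_mollifier_mul_le (hbsub x) fun η hη => hbx x η hη.le).trans
      (div_le_self (hδ _).le (by linarith))
  · refine (norm_fderiv_convolution_mollifier_le hbc (r := δ ⌈‖x‖⌉₊ / (1 + C)) fun η hη =>
      (abs_of_pos (hb0 _)).trans_le (hbx x η hη)).trans ?_
    have := hδ ⌈‖x‖⌉₊
    rw [mul_div_assoc', div_le_iff₀ (by positivity)]
    nlinarith

end PositiveMinorant

theorem hasDerivAt_comp_sub_smul {E : Type*} [NormedAddCommGroup E] [NormedSpace ℝ E]
    {U σ : E → ℝ} {x v η : E} (hσ : DifferentiableAt ℝ σ x)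
    (hU : DifferentiableAt ℝ U (x - σ x • η)) :
    HasDerivAt (fun t : ℝ => U (x + t • v - σ (x + t • v) • η))
      (fderiv ℝ U (x - σ x • η) (v - fderiv ℝ σ x v • η)) 0 := by
  have hline : HasDerivAt (fun t : ℝ => x + t • v) v 0 := by
    simpa using ((hasDerivAt_id (0 : ℝ)).smul_const v).const_add x
  have hx : x + (0 : ℝ) • v = x := by simp
  have hσline : HasDerivAt (fun t : ℝ => σ (x + t • v)) (fderiv ℝ σ x v) 0 := by
    rw [← hx] at hσ
    simpa only [hx, Function.comp_def] using hσ.hasFDerivAt.comp_hasDerivAt (0 : ℝ) hline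
  have hpoint := hline.sub (hσline.smul_const η)
  refine HasFDerivAt.comp_hasDerivAt (0 : ℝ) ?_ hpoint
  simpa only [Pi.sub_apply, hx] using hU.hasFDerivAt

section VariableRadius

variable {E : Type*} [NormedAddCommGroup E] [NormedSpace ℝ E] [FiniteDimensional ℝ E]
  [MeasurableSpace E] [BorelSpace E] {μ : Measure E} [μ.IsAddHaarMeasure] {U σ : E → ℝ}

theorem contDiff_integral_mollifier_mul_sub_smul (hU : Continuous U)
    (hσ : ContDiff ℝ (⊤ : ℕ∞) σ) (hσ0 : ∀ x, 0 < σ x) (hσ1 : ∀ x, σ x ≤ 1) :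
    ContDiff ℝ (⊤ : ℕ∞) fun x => ∫ η, mollifier μ η * U (x - σ x • η) ∂μ := by
  have : ProperSpace E := FiniteDimensional.proper ℝ E
  let kernel : E → E → ℝ := fun x ζ =>
    (σ x ^ Module.finrank ℝ E)⁻¹ * mollifier μ ((σ x)⁻¹ • ζ)
  have hkernel : ContDiff ℝ (⊤ : ℕ∞) (Function.uncurry kernel) :=
    have hσfst : ContDiff ℝ (⊤ : ℕ∞) fun q : E × E => σ q.1 := hσ.comp contDiff_fst
    ((hσfst.pow _).inv fun q => (pow_pos (hσ0 _) _).ne').mul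
      (contDiff_mollifier.comp ((hσfst.inv fun q => (hσ0 _).ne').smul contDiff_snd))
  have hsupport : ∀ x ζ, x ∈ univ → ζ ∉ Metric.closedBall 0 1 → kernel x ζ = 0 := by
    intro x ζ _ hζ
    have hζ1 : 1 < ‖ζ‖ := by simpa using hζ
    refine mul_eq_zero_of_right _ (mollifier_eq_zero ?_)
    rw [norm_smul, norm_inv, Real.norm_of_nonneg (hσ0 x).le, inv_mul_eq_div, one_le_div (hσ0 x)]
    exact (hσ1 x).trans hζ1.le
  have hconv := contDiffOn_convolution_left_with_param_comp (μ := μ)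
    (ContinuousLinearMap.mul ℝ ℝ) (n := ⊤) contDiffOn_id isOpen_univ
    (isCompact_closedBall 0 1) hsupport hU.locallyIntegrable hkernel.contDiffOn
  convert! contDiffOn_univ.1 hconv using 1
  funext x
  have hscale := Measure.integral_comp_smul_of_nonneg μ
    (fun ζ => mollifier μ ((σ x)⁻¹ • ζ) * U (x - ζ)) (σ x) (hR := (hσ0 x).le)
  simp only [inv_smul_smul₀ (hσ0 x).ne'] at hscale
  simp only [hscale, convolution_def, kernel, ContinuousLinearMap.mul_apply', mul_assoc, id_eq,
    integral_const_mul, smul_eq_mul]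

theorem ae_differentiableAt_of_locallyLipschitz (hU : LocallyLipschitz U) :
    ∀ᵐ y ∂μ, DifferentiableAt ℝ U y := by
  have : ProperSpace E := FiniteDimensional.proper ℝ E
  refine measure_null_of_locally_null {y | ¬DifferentiableAt ℝ U y} fun x _ => ?_
  obtain ⟨K, t, ht, hK⟩ := hU x
  refine ⟨{y | ¬DifferentiableAt ℝ U y} ∩ interior t,
    inter_mem_nhdsWithin _ (interior_mem_nhds.2 ht), ?_⟩
  refine measure_mono_null ?_ ((hK.mono interior_subset).ae_differentiableWithinAt_of_mem (μ := μ))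
  rintro y ⟨hy, hyt⟩ hd
  exact hy ((hd hyt).differentiableAt (isOpen_interior.mem_nhds hyt))

theorem ae_differentiableAt_sub_smul (hU : LocallyLipschitz U) (x : E) {r : ℝ} (hr : r ≠ 0) :
    ∀ᵐ η ∂μ, DifferentiableAt ℝ U (x - r • η) :=
  ((quasiMeasurePreserving_sub_left_of_right_invariant μ x).comp
    (Measure.quasiMeasurePreserving_smul μ hr)).ae (ae_differentiableAt_of_locallyLipschitz hU)

theorem hasDerivAt_integral_mollifier_mul {Φ : ℝ × E → ℝ} (hΦ : LocallyLipschitz Φ)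
    {Φ' : E → ℝ} (hΦ' : ∀ᵐ η ∂μ, HasDerivAt (fun t => Φ (t, η)) (Φ' η) 0) :
    Integrable (fun η => mollifier μ η * Φ' η) μ ∧
      HasDerivAt (fun t => ∫ η, mollifier μ η * Φ (t, η) ∂μ)
        (∫ η, mollifier μ η * Φ' η ∂μ) 0 := by
  have : ProperSpace E := FiniteDimensional.proper ℝ E
  obtain ⟨K, hK⟩ := LocallyLipschitzOn.exists_lipschitzOnWith_of_compact
    ((isCompact_Icc (a := (-1 : ℝ)) (b := 1)).prod (isCompact_closedBall (0 : E) 1))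
    hΦ.locallyLipschitzOn
  have hint : ∀ t, Integrable (fun η => mollifier μ η * Φ (t, η)) μ := fun t =>
    integrable_mollifier_mul (hΦ.continuous.comp (Continuous.prodMk_right t))
  have hmeas : AEStronglyMeasurable Φ' μ := by
    have hcont : Continuous (Function.uncurry fun (η : E) (t : ℝ) => Φ (t, η)) :=
      hΦ.continuous.comp continuous_swap
    refine ((measurable_deriv_with_param hcont).comp
      (measurable_id.prodMk (measurable_const (a := 0)))).aestronglyMeasurable.congr ?_
    filter_upwards [hΦ'] with η hη using hη.deriv
  refine hasDerivAt_integral_of_dominated_loc_of_lip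
    (bound := fun η => mollifier μ η * K) (Icc_mem_nhds (neg_one_lt_zero (R := ℝ)) one_pos)
    (Eventually.of_forall fun t => (hint t).aestronglyMeasurable) (hint 0)
    (contDiff_mollifier.continuous.aestronglyMeasurable.mul hmeas) (ae_of_all _ fun η => ?_)
    (integrable_mollifier_mul continuous_const) ?_
  · refine LipschitzOnWith.of_dist_le_mul fun s hs t ht => ?_
    rw [Real.dist_eq, ← mul_sub, abs_mul, abs_of_nonneg (mollifier_nonneg η), Real.coe_nnabs,
      abs_of_nonneg (mul_nonneg (mollifier_nonneg η) K.coe_nonneg), mul_assoc]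
    rcases lt_or_ge ‖η‖ 1 with hη | hη
    · refine mul_le_mul_of_nonneg_left ?_ (mollifier_nonneg η)
      have hηball : η ∈ Metric.closedBall (0 : E) 1 := mem_closedBall_zero_iff.2 hη.le
      simpa [Real.dist_eq] using hK.dist_le_mul (s, η) ⟨hs, hηball⟩ (t, η) ⟨ht, hηball⟩
    · simp only [mollifier_eq_zero hη, zero_mul, le_refl]
  · filter_upwards [hΦ'] with η hη using hη.const_mul _

theorem fderiv_integral_mollifier_mul_sub_smul_le (hU : LocallyLipschitz U)
    (hσ : ContDiff ℝ (⊤ : ℕ∞) σ) (hσ0 : ∀ x, 0 < σ x) (hσ1 : ∀ x, σ x ≤ 1) {x v : E} {r : ℝ}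
    (h : ∀ η, ‖η‖ < 1 → DifferentiableAt ℝ U (x - σ x • η) →
      fderiv ℝ U (x - σ x • η) (v - fderiv ℝ σ x v • η) ≤ r) :
    fderiv ℝ (fun x => ∫ η, mollifier μ η * U (x - σ x • η) ∂μ) x v ≤ r := by
  set W : E → ℝ := fun x => ∫ η, mollifier μ η * U (x - σ x • η) ∂μ
  have hW : ContDiff ℝ (⊤ : ℕ∞) W :=
    contDiff_integral_mollifier_mul_sub_smul hU.continuous hσ hσ0 hσ1
  have hdiff := ae_differentiableAt_sub_smul (μ := μ) hU x (hσ0 x).ne'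
  have hpoint : ContDiff ℝ 1 fun p : ℝ × E => x + p.1 • v - σ (x + p.1 • v) • p.2 := by
    have hσ' : ContDiff ℝ 1 σ := hσ.of_le (by simp)
    fun_prop
  obtain ⟨hint, hderiv⟩ := hasDerivAt_integral_mollifier_mul (μ := μ)
    (hU.comp hpoint.locallyLipschitz) (hdiff.mono fun η hη =>
      hasDerivAt_comp_sub_smul (v := v) (hσ.differentiable (by simp) x) hη)
  have hline : HasDerivAt (fun t : ℝ => W (x + t • v)) (fderiv ℝ W x v) 0 :=
    (hW.differentiable (by simp) x).hasFDerivAt.hasLineDerivAt v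
  rw [hline.unique hderiv, ← integral_mollifier_mul_const (μ := μ) r]
  refine integral_mono_ae hint (integrable_mollifier_mul continuous_const) ?_
  filter_upwards [hdiff] with η hη
  rcases lt_or_ge ‖η‖ 1 with hη1 | hη1
  · exact mul_le_mul_of_nonneg_left (h η hη1 hη) (mollifier_nonneg η)
  · simp only [mollifier_eq_zero hη1, zero_mul, le_refl]

end VariableRadius

section SmoothApproximation

variable {E D : Type*} [NormedAddCommGroup E] [NormedSpace ℝ E] [FiniteDimensional ℝ E]
  [NormedAddCommGroup D] [ProperSpace D] {U : E → ℝ} {H : E × D → E}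

theorem exists_pos_fderiv_sub_le (hU : LocallyLipschitz U) (hH : LocallyLipschitz H)
    (hdecay : ∀ ξ v, ‖v‖ ≤ 1 → DifferentiableAt ℝ U ξ → fderiv ℝ U ξ (H (ξ, v)) ≤ -U ξ)
    {ε : ℝ} (hε : 0 < ε) (R : ℝ) :
    ∃ δ, 0 < δ ∧ δ ≤ 1 ∧ ∀ x y, ‖x‖ ≤ R → ‖y - x‖ ≤ δ → |U y - U x| ≤ ε ∧
      ∀ v u, ‖v‖ ≤ 1 → ‖u‖ ≤ δ * ‖H (x, v)‖ → DifferentiableAt ℝ U y →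
        fderiv ℝ U y (H (x, v) - u) ≤ -U x + ε := by
  have : ProperSpace E := FiniteDimensional.proper ℝ E
  obtain ⟨L, hL⟩ := LocallyLipschitzOn.exists_lipschitzOnWith_of_compact
    (isCompact_closedBall (0 : E) (R + 2)) hU.locallyLipschitzOn
  obtain ⟨K, hK0, hK⟩ := exists_norm_sub_le_of_locallyLipschitz hH (R + 1) 1
  obtain ⟨M, hM⟩ := exists_norm_le_of_continuous hH.continuous R 1
  obtain ⟨δ, hδ0, hδ1, hδ⟩ : ∃ δ, 0 < δ ∧ δ ≤ 1 ∧ (L + L * (K + |M|)) * δ ≤ ε := by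
    refine ⟨min 1 (ε / (1 + (L + L * (K + |M|)))), by positivity, min_le_left _ _, ?_⟩
    refine (mul_le_mul_of_nonneg_left (min_le_right _ _) (by positivity)).trans ?_
    rw [mul_div_assoc', div_le_iff₀ (by positivity)]
    nlinarith
  refine ⟨δ, hδ0, hδ1, fun x y hx hyx => ?_⟩
  have hy : ‖y‖ ≤ R + 1 := by linarith [norm_le_norm_add_norm_sub' y x]
  have hLyx : |U y - U x| ≤ L * δ := by
    refine (hL.norm_sub_le ?_ ?_).trans (mul_le_mul_of_nonneg_left hyx L.2)
    all_goals rw [mem_closedBall_zero_iff]; linarith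
  rw [add_mul, mul_assoc (L : ℝ)] at hδ
  have hfield : 0 ≤ L * ((K + |M|) * δ) := by positivity
  refine ⟨by linarith, fun v u hv hu hdiff => ?_⟩
  have hfderiv : ‖fderiv ℝ U y‖ ≤ L := by
    refine norm_fderiv_le_of_lipschitzOn ℝ ?_ hL
    exact Metric.closedBall_mem_nhds_of_mem (by rw [mem_ball_zero_iff]; linarith)
  have hperturb : ‖H (x, v) - H (y, v) - u‖ ≤ (K + |M|) * δ := by
    have hxy := hK x y v (by linarith) hy hv
    have hMx := (hM x v hx hv).trans (le_abs_self M)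
    rw [norm_sub_rev] at hyx
    nlinarith [norm_sub_le (H (x, v) - H (y, v)) u]
  calc fderiv ℝ U y (H (x, v) - u)
      = fderiv ℝ U y (H (y, v)) + fderiv ℝ U y (H (x, v) - H (y, v) - u) := by
        rw [← map_add]; congr 1; abel
    _ ≤ -U y + L * ((K + |M|) * δ) := by
        refine add_le_add (hdecay y v hv hdiff) ((le_abs_self _).trans ?_)
        exact ((fderiv ℝ U y).le_opNorm _).trans (by gcongr)
    _ ≤ -U x + ε := by linarith [neg_le_of_abs_le hLyx]

/-- The radius `σ` of mollification varies so slowly that its derivative perturbs the direction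
`H(ξ, v)` only by a small vector, which the decay of `U` absorbs. -/
theorem exists_contDiff_fderiv_le (hU : LocallyLipschitz U) (hH : LocallyLipschitz H)
    (hdecay : ∀ ξ v, ‖v‖ ≤ 1 → DifferentiableAt ℝ U ξ → fderiv ℝ U ξ (H (ξ, v)) ≤ -U ξ)
    {ε : ℝ} (hε : 0 < ε) :
    ∃ W : E → ℝ, ContDiff ℝ (⊤ : ℕ∞) W ∧ (∀ ξ, |W ξ - U ξ| ≤ ε) ∧
      ∀ ξ v, ‖v‖ ≤ 1 → fderiv ℝ W ξ (H (ξ, v)) ≤ -U ξ + ε := by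
  borelize E
  let μ : Measure E := Measure.addHaar
  choose δ hδ0 hδ1 hδ using fun n : ℕ => exists_pos_fderiv_sub_le hU hH hdecay hε n
  obtain ⟨σ, hσ, hσδ⟩ := exists_contDiff_pos_le (E := E) hδ0
  have hσ0 : ∀ x, 0 < σ x := fun x => (hσδ x).1
  have hσ1 : ∀ x, σ x ≤ 1 := fun x => (hσδ x).2.1.trans (hδ1 _)
  have hnear : ∀ x η, ‖η‖ < 1 → ‖x - σ x • η - x‖ ≤ δ ⌈‖x‖⌉₊ := fun x η hη => by
    rw [sub_sub_cancel_left, norm_neg, norm_smul, Real.norm_of_nonneg (hσ0 x).le]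
    exact (mul_le_of_le_one_right (hσ0 x).le hη.le).trans (hσδ x).2.1
  have hcont : ∀ x, Continuous fun η => U (x - σ x • η) := fun x =>
    hU.continuous.comp (by fun_prop)
  refine ⟨fun x => ∫ η, mollifier μ η * U (x - σ x • η) ∂μ,
    contDiff_integral_mollifier_mul_sub_smul hU.continuous hσ hσ0 hσ1, fun x => ?_,
    fun x v hv => ?_⟩
  · have hclose : ∀ η, ‖η‖ < 1 → |U (x - σ x • η) - U x| ≤ ε := fun η hη =>
      (hδ _ x _ (Nat.le_ceil _) (hnear x η hη)).1
    rw [abs_sub_le_iff, sub_le_iff_le_add, sub_le_comm]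
    exact ⟨integral_mollifier_mul_le (hcont x) fun η hη => by
        linarith [le_of_abs_le (hclose η hη)],
      le_integral_mollifier_mul (hcont x) fun η hη => by
        linarith [neg_le_of_abs_le (hclose η hη)]⟩
  · refine fderiv_integral_mollifier_mul_sub_smul_le hU hσ hσ0 hσ1 fun η hη hdiff => ?_
    refine (hδ _ x _ (Nat.le_ceil _) (hnear x η hη)).2 v _ hv ?_ hdiff
    rw [norm_smul]
    calc ‖fderiv ℝ σ x (H (x, v))‖ * ‖η‖ ≤ ‖fderiv ℝ σ x (H (x, v))‖ :=
          mul_le_of_le_one_right (norm_nonneg _) hη.le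
      _ ≤ δ ⌈‖x‖⌉₊ * ‖H (x, v)‖ :=
          (fderiv ℝ σ x).le_of_opNorm_le (hσδ x).2.2 _

end SmoothApproximation

/-! ### Smooth series -/

theorem exists_pos_forall_summable_mul {ι : Type*} [Countable ι] (M : ι → ℕ → ℝ) :
    ∃ c : ℕ → ℝ, (∀ j, 0 < c j) ∧ ∀ i, Summable fun j => c j * |M i j| := by
  rcases isEmpty_or_nonempty ι with _ | _
  · exact ⟨1, fun _ => one_pos, isEmptyElim⟩
  obtain ⟨e, he⟩ := exists_surjective_nat ι
  have hsum (j : ℕ) : 0 ≤ ∑ k ∈ Finset.range (j + 1), |M (e k) j| :=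
    Finset.sum_nonneg fun _ _ => abs_nonneg _
  have hpos (j : ℕ) : 0 < 1 + ∑ k ∈ Finset.range (j + 1), |M (e k) j| := by linarith [hsum j]
  let c : ℕ → ℝ := fun j => (1 / 2) ^ j / (1 + ∑ k ∈ Finset.range (j + 1), |M (e k) j|)
  have hc (j : ℕ) : 0 < c j := div_pos (by positivity) (hpos j)
  refine ⟨c, hc, fun i => ?_⟩
  obtain ⟨k, rfl⟩ := he i
  refine summable_geometric_two.of_norm_bounded_eventually_nat ?_
  filter_upwards [eventually_ge_atTop k] with j hj
  have hterm : |M (e k) j| ≤ ∑ k ∈ Finset.range (j + 1), |M (e k) j| :=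
    Finset.single_le_sum (f := fun k => |M (e k) j|) (fun _ _ => abs_nonneg _)
      (Finset.mem_range.2 (by omega))
  rw [Real.norm_of_nonneg (mul_nonneg (hc j).le (abs_nonneg _)), div_mul_eq_mul_div,
    div_le_iff₀ (hpos j)]
  gcongr
  linarith

section SmoothSeries

variable {E : Type*} [NormedAddCommGroup E] [NormedSpace ℝ E] {F : ℕ → E → ℝ}

/-- The series `∑ F j` converges pointwise to a smooth function and can be differentiated termwise
in every direction. -/
structure IsSmoothSeries (F : ℕ → E → ℝ) : Prop where
  summable : ∀ x, Summable fun j => F j x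
  contDiff : ContDiff ℝ (⊤ : ℕ∞) fun x => ∑' j, F j x
  hasSum_fderiv : ∀ x v, HasSum (fun j => fderiv ℝ (F j) x v) (fderiv ℝ (fun x => ∑' j, F j x) x v)

theorem isSmoothSeries_of_summable {u : ℕ → ℕ → ℝ} (hF : ∀ j, ContDiff ℝ (⊤ : ℕ∞) (F j))
    (hu : ∀ k, Summable (u k)) (hFu : ∀ k j x, ‖iteratedFDeriv ℝ k (F j) x‖ ≤ u k j) :
    IsSmoothSeries F := by
  have hsummable (x : E) : Summable fun j => F j x :=
    (hu 0).of_norm_bounded fun j => by simpa only [norm_iteratedFDeriv_zero] using hFu 0 j x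
  have hfderiv (j : ℕ) (x : E) : ‖fderiv ℝ (F j) x‖ ≤ u 1 j := by
    simpa only [norm_iteratedFDeriv_one] using hFu 1 j x
  refine ⟨hsummable, contDiff_tsum hF (fun k _ => hu k) fun k j x _ => hFu k j x, fun x v => ?_⟩
  rw [fderiv_tsum_apply (hu 1) (fun j => (hF j).differentiable (by simp)) hfderiv (hsummable 0)]
  exact ((hu 1).of_norm_bounded (hfderiv · x)).hasSum.mapL (ContinuousLinearMap.apply ℝ ℝ v)

theorem isSmoothSeries_of_locally
    (h : ∀ x, ∃ G : ℕ → E → ℝ, IsSmoothSeries G ∧ ∀ᶠ y in 𝓝 x, ∀ j, F j y = G j y) :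
    IsSmoothSeries F := by
  have htsum {G : ℕ → E → ℝ} {x : E} (hFG : ∀ᶠ y in 𝓝 x, ∀ j, F j y = G j y) :
      (fun y => ∑' j, F j y) =ᶠ[𝓝 x] fun y => ∑' j, G j y :=
    hFG.mono fun y hy => tsum_congr hy
  refine ⟨fun x => ?_, contDiff_iff_contDiffAt.2 fun x => ?_, fun x v => ?_⟩
  all_goals obtain ⟨G, hG, hFG⟩ := h x
  · exact (hG.summable x).congr fun j => (hFG.self_of_nhds j).symm
  · exact hG.contDiff.contDiffAt.congr_of_eventuallyEq (htsum hFG)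
  · rw [(htsum hFG).fderiv_eq]
    refine (hG.hasSum_fderiv x v).congr_fun fun j => ?_
    have hj : F j =ᶠ[𝓝 x] G j := hFG.mono fun y hy => hy j
    rw [hj.fderiv_eq]

/-- The weights are chosen so that each derivative of the functions `c j * φ R * F j`, where `φ R`
is a bump function equal to `1` on the ball of radius `R`, is uniformly summable for every `R`. -/
theorem exists_pos_isSmoothSeries [FiniteDimensional ℝ E]
    (hF : ∀ j, ContDiff ℝ (⊤ : ℕ∞) (F j)) :
    ∃ c : ℕ → ℝ, (∀ j, 0 < c j) ∧ ∀ c' : ℕ → ℝ, (∀ j, 0 ≤ c' j) → (∀ j, c' j ≤ c j) →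
      IsSmoothSeries fun j x => c' j * F j x := by
  have : ProperSpace E := FiniteDimensional.proper ℝ E
  let φ : ℕ → ContDiffBump (0 : E) := fun R => ⟨R + 1, R + 2, by positivity, by linarith⟩
  have hφF (R j : ℕ) : ContDiff ℝ (⊤ : ℕ∞) fun x => φ R x * F j x := (φ R).contDiff.mul (hF j)
  have hbound (p : ℕ × ℕ) (j : ℕ) :
      ∃ M, ∀ x, ‖iteratedFDeriv ℝ p.2 (fun x => φ p.1 x * F j x) x‖ ≤ M :=
    (contDiff_infty.1 (hφF p.1 j) p.2).continuous_iteratedFDeriv'.bounded_above_of_compact_support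
      ((φ p.1).hasCompactSupport.mul_right.iteratedFDeriv p.2)
  choose M hM using hbound
  obtain ⟨c, hc, hsum⟩ := exists_pos_forall_summable_mul M
  refine ⟨c, hc, fun c' hc'0 hc' => isSmoothSeries_of_locally fun x =>
    ⟨fun j y => c' j * (φ ⌈‖x‖⌉₊ y * F j y), ?_, ?_⟩⟩
  · refine isSmoothSeries_of_summable (fun j => contDiff_const.mul (hφF _ j))
      (fun k => hsum (⌈‖x‖⌉₊, k)) fun k j y => ?_
    have hsmul : iteratedFDeriv ℝ k (fun y => c' j * (φ ⌈‖x‖⌉₊ y * F j y)) y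
        = c' j • iteratedFDeriv ℝ k (fun y => φ ⌈‖x‖⌉₊ y * F j y) y :=
      iteratedFDeriv_const_smul_apply' (a := c' j) (contDiff_infty.1 (hφF _ j) k).contDiffAt
    rw [hsmul, norm_smul, Real.norm_of_nonneg (hc'0 j)]
    exact mul_le_mul (hc' j) ((hM (⌈‖x‖⌉₊, k) j y).trans (le_abs_self _)) (norm_nonneg _) (hc j).le
  · have hlt : ‖x‖ < ⌈‖x‖⌉₊ + 1 := (Nat.le_ceil _).trans_lt (lt_add_one _)
    filter_upwards [continuous_norm.continuousAt.eventually_lt_const hlt] with y hy j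
    rw [(φ _).one_of_mem_closedBall (mem_closedBall_zero_iff.2 hy.le), one_mul]

theorem exists_pos_isSmoothSeries_and [FiniteDimensional ℝ E] {E' : Type*}
    [NormedAddCommGroup E'] [NormedSpace ℝ E'] [FiniteDimensional ℝ E'] {G : ℕ → E' → ℝ}
    (hF : ∀ j, ContDiff ℝ (⊤ : ℕ∞) (F j)) (hG : ∀ j, ContDiff ℝ (⊤ : ℕ∞) (G j)) :
    ∃ c : ℕ → ℝ, (∀ j, 0 < c j) ∧ IsSmoothSeries (fun j x => c j * F j x) ∧
      IsSmoothSeries fun j x => c j * G j x := by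
  obtain ⟨a, ha, haF⟩ := exists_pos_isSmoothSeries hF
  obtain ⟨b, hb, hbG⟩ := exists_pos_isSmoothSeries hG
  have hc (j : ℕ) : 0 < min (a j) (b j) := lt_min (ha j) (hb j)
  exact ⟨fun j => min (a j) (b j), hc, haF _ (fun j => (hc j).le) fun j => min_le_left _ _,
    hbG _ (fun j => (hc j).le) fun j => min_le_right _ _⟩

end SmoothSeries

section SmoothRamp

/-- A smooth unbounded function which vanishes on `(-∞, 0]` and has positive derivative on
`(0, ∞)`. It is composed with functions that decrease only where they are positive. -/
def smoothRamp (s : ℝ) : ℝ := s * expNegInvGlue s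

theorem contDiff_smoothRamp : ContDiff ℝ (⊤ : ℕ∞) smoothRamp :=
  contDiff_id.mul expNegInvGlue.contDiff

theorem smoothRamp_of_nonpos {s : ℝ} (hs : s ≤ 0) : smoothRamp s = 0 :=
  mul_eq_zero_of_right _ (expNegInvGlue.zero_of_nonpos hs)

theorem smoothRamp_lt_smoothRamp {s t : ℝ} (hst : s < t) (ht : 0 < t) :
    smoothRamp s < smoothRamp t := by
  rcases le_or_gt s 0 with hs | hs
  · rw [smoothRamp_of_nonpos hs]
    exact mul_pos ht (expNegInvGlue.pos_of_pos ht)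
  · exact mul_lt_mul hst (expNegInvGlue.monotone hst.le) (expNegInvGlue.pos_of_pos hs) ht.le

theorem monotone_smoothRamp : Monotone smoothRamp := fun s t hst => by
  rcases le_or_gt t 0 with ht | ht
  · rw [smoothRamp_of_nonpos ht, smoothRamp_of_nonpos (hst.trans ht)]
  · rcases hst.eq_or_lt with rfl | hst
    exacts [le_rfl, (smoothRamp_lt_smoothRamp hst ht).le]

theorem smoothRamp_nonneg (s : ℝ) : 0 ≤ smoothRamp s := by
  rcases le_or_gt s 0 with hs | hs
  exacts [(smoothRamp_of_nonpos hs).ge, mul_nonneg hs.le (expNegInvGlue.nonneg s)]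

theorem deriv_smoothRamp_of_nonpos {s : ℝ} (hs : s ≤ 0) : deriv smoothRamp s = 0 :=
  IsLocalMin.deriv_eq_zero (.of_forall fun t => smoothRamp_of_nonpos hs ▸ smoothRamp_nonneg t)

theorem deriv_smoothRamp_pos {s : ℝ} (hs : 0 < s) : 0 < deriv smoothRamp s := by
  have hderiv : HasDerivAt smoothRamp (1 * expNegInvGlue s + s * deriv expNegInvGlue s) s :=
    (hasDerivAt_id s).mul
      ((expNegInvGlue.contDiff (n := 1)).differentiable one_ne_zero s).hasDerivAt
  rw [hderiv.deriv, one_mul]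
  exact add_pos_of_pos_of_nonneg (expNegInvGlue.pos_of_pos hs)
    (mul_nonneg hs.le expNegInvGlue.monotone.deriv_nonneg)

theorem tendsto_smoothRamp_atTop : Tendsto smoothRamp atTop atTop := by
  refine tendsto_atTop_mono' _ ?_ (tendsto_id.atTop_mul_const (expNegInvGlue.pos_of_pos one_pos))
  filter_upwards [eventually_ge_atTop 1] with s hs
  exact mul_le_mul_of_nonneg_left (expNegInvGlue.monotone hs) (zero_le_one.trans hs)

theorem isClassKInfty_tsum_smoothRamp {c ε : ℕ → ℝ} (hc : ∀ j, 0 < c j) (hε : ∀ j, 0 ≤ ε j)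
    (hε0 : Tendsto ε atTop (𝓝 0)) (hsum : IsSmoothSeries fun j s => c j * smoothRamp (s - ε j)) :
    IsClassKInfty fun s => ∑' j, c j * smoothRamp (s - ε j) := by
  have hmono {s t : ℝ} (hst : s ≤ t) (j : ℕ) :
      c j * smoothRamp (s - ε j) ≤ c j * smoothRamp (t - ε j) :=
    mul_le_mul_of_nonneg_left (monotone_smoothRamp (sub_le_sub_right hst _)) (hc j).le
  refine ⟨⟨hsum.contDiff.continuous.continuousOn, fun s (hs : 0 ≤ s) t _ hst => ?_, ?_⟩, ?_⟩
  · obtain ⟨j, hj⟩ := (hε0.eventually_lt_const (hs.trans_lt hst)).exists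
    exact (hsum.summable s).tsum_lt_tsum (hmono hst.le)
      (mul_lt_mul_of_pos_left (smoothRamp_lt_smoothRamp (sub_lt_sub_right hst _) (sub_pos.2 hj))
        (hc j)) (hsum.summable t)
  · have hzero (j : ℕ) : smoothRamp (0 - ε j) = 0 :=
      smoothRamp_of_nonpos (sub_nonpos.2 (hε j))
    simp only [hzero, mul_zero, tsum_zero]
  · refine tendsto_atTop_mono (fun s => (hsum.summable s).le_tsum 0 fun j _ =>
      mul_nonneg (hc j).le (smoothRamp_nonneg _)) ?_
    exact (tendsto_smoothRamp_atTop.comp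
      (tendsto_atTop_add_const_right _ (-ε 0) tendsto_id)).const_mul_atTop (hc 0)

variable {E : Type*} [NormedAddCommGroup E] [NormedSpace ℝ E] {ξ v : E}

section SingleRamp

variable {W : E → ℝ} {a c : ℝ}

theorem fderiv_const_mul_smoothRamp_sub (hW : DifferentiableAt ℝ W ξ) :
    fderiv ℝ (fun x => c * smoothRamp (W x - a)) ξ v
      = c * (deriv smoothRamp (W ξ - a) * fderiv ℝ W ξ v) := by
  have hcomp := ((contDiff_smoothRamp.differentiable (by simp) _).hasDerivAt.comp_hasFDerivAt ξ
    (hW.hasFDerivAt.sub_const a)).const_mul c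
  exact congrArg (· v) hcomp.fderiv

theorem fderiv_const_mul_smoothRamp_sub_neg (hc : 0 < c) (hW : DifferentiableAt ℝ W ξ)
    (ha : a < W ξ) (hneg : fderiv ℝ W ξ v < 0) :
    fderiv ℝ (fun x => c * smoothRamp (W x - a)) ξ v < 0 := by
  rw [fderiv_const_mul_smoothRamp_sub hW]
  exact mul_neg_of_pos_of_neg hc
    (mul_neg_of_pos_of_neg (deriv_smoothRamp_pos (sub_pos.2 ha)) hneg)

theorem fderiv_const_mul_smoothRamp_sub_nonpos (hc : 0 < c) (hW : DifferentiableAt ℝ W ξ)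
    (hneg : a < W ξ → fderiv ℝ W ξ v < 0) :
    fderiv ℝ (fun x => c * smoothRamp (W x - a)) ξ v ≤ 0 := by
  rcases le_or_gt (W ξ) a with ha | ha
  · rw [fderiv_const_mul_smoothRamp_sub hW, deriv_smoothRamp_of_nonpos (sub_nonpos.2 ha),
      zero_mul, mul_zero]
  · exact (fderiv_const_mul_smoothRamp_sub_neg hc hW ha (hneg ha)).le

end SingleRamp

variable {W : ℕ → E → ℝ} {a c : ℕ → ℝ}

theorem fderiv_tsum_smoothRamp_nonpos (hc : ∀ j, 0 < c j)
    (hsum : IsSmoothSeries fun j x => c j * smoothRamp (W j x - a j))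
    (hW : ∀ j, DifferentiableAt ℝ (W j) ξ) (hneg : ∀ j, a j < W j ξ → fderiv ℝ (W j) ξ v < 0) :
    fderiv ℝ (fun x => ∑' j, c j * smoothRamp (W j x - a j)) ξ v ≤ 0 :=
  hasSum_le (fun j => fderiv_const_mul_smoothRamp_sub_nonpos (hc j) (hW j) (hneg j))
    (hsum.hasSum_fderiv ξ v) hasSum_zero

theorem fderiv_tsum_smoothRamp_neg (hc : ∀ j, 0 < c j)
    (hsum : IsSmoothSeries fun j x => c j * smoothRamp (W j x - a j))
    (hW : ∀ j, DifferentiableAt ℝ (W j) ξ) (hneg : ∀ j, a j < W j ξ → fderiv ℝ (W j) ξ v < 0)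
    (hpos : 0 < ∑' j, c j * smoothRamp (W j ξ - a j)) :
    fderiv ℝ (fun x => ∑' j, c j * smoothRamp (W j x - a j)) ξ v < 0 := by
  obtain ⟨j, hj⟩ : ∃ j, a j < W j ξ := by
    by_contra! hle
    have hzero (j : ℕ) : smoothRamp (W j ξ - a j) = 0 := smoothRamp_of_nonpos (sub_nonpos.2 (hle j))
    simp only [hzero, mul_zero, tsum_zero, lt_irrefl] at hpos
  exact hasSum_lt (fun j => fderiv_const_mul_smoothRamp_sub_nonpos (hc j) (hW j) (hneg j))
    (fderiv_const_mul_smoothRamp_sub_neg (hc j) (hW j) hj (hneg j hj))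
    (hsum.hasSum_fderiv ξ v) hasSum_zero

end SmoothRamp

/-! ### Robust output stability implies a Lyapunov function -/

section PenalizedInf

/-- The infimum over `K` of the rate `g`, relaxed by the penalty `(s - V)⁺` for leaving the set
where `V ≥ s`; the penalty makes it continuous in the level `s`. -/
def penalizedInf {X : Type*} (g V : X → ℝ) (K : Set X) (s : ℝ) : ℝ :=
  sInf ((fun p => g p + max (s - V p) 0) '' K)

variable {X : Type*} [TopologicalSpace X] {g V : X → ℝ} {K K' : Set X} {s t : ℝ}

theorem continuous_penalizedInf (hK : IsCompact K) (hg : Continuous g) (hV : Continuous V) :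
    Continuous (penalizedInf g V K) :=
  hK.continuous_sInf (f := fun s p => g p + max (s - V p) 0)
    (by simp only [Function.HasUncurry.uncurry, id]; fun_prop)

theorem bddBelow_penalized_image (hK : IsCompact K) (hg : Continuous g) (hV : Continuous V) :
    BddBelow ((fun p => g p + max (s - V p) 0) '' K) :=
  hK.bddBelow_image (by fun_prop)

theorem penalizedInf_le (hK : IsCompact K) (hg : Continuous g) (hV : Continuous V) {p : X}
    (hp : p ∈ K) : penalizedInf g V K s ≤ g p + max (s - V p) 0 :=
  csInf_le (bddBelow_penalized_image hK hg hV) (mem_image_of_mem _ hp)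

theorem penalizedInf_anti (hK' : IsCompact K') (hg : Continuous g) (hV : Continuous V)
    (hK : K.Nonempty) (hKK' : K ⊆ K') : penalizedInf g V K' s ≤ penalizedInf g V K s :=
  csInf_le_csInf (bddBelow_penalized_image hK' hg hV) (hK.image _) (image_mono hKK')

theorem penalizedInf_mono (hK : IsCompact K) (hg : Continuous g) (hV : Continuous V)
    (hne : K.Nonempty) (hst : s ≤ t) : penalizedInf g V K s ≤ penalizedInf g V K t := by
  refine le_csInf (hne.image _) ?_
  rintro _ ⟨p, hp, rfl⟩
  exact (penalizedInf_le hK hg hV hp).trans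
    (add_le_add le_rfl (max_le_max (sub_le_sub_right hst _) le_rfl))

theorem penalizedInf_pos (hK : IsCompact K) (hg : Continuous g) (hV : Continuous V)
    (hne : K.Nonempty) (hg0 : ∀ p ∈ K, 0 ≤ g p) (hgV : ∀ p ∈ K, 0 < V p → 0 < g p) (hs : 0 < s) :
    0 < penalizedInf g V K s := by
  obtain ⟨p, hp, hinf⟩ := hK.exists_sInf_image_eq (f := fun p => g p + max (s - V p) 0) hne
    (by fun_prop)
  rw [penalizedInf, hinf]
  rcases le_or_gt (V p) 0 with hVp | hVp
  · exact add_pos_of_nonneg_of_pos (hg0 p hp) (lt_max_of_lt_left (by linarith))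
  · exact add_pos_of_pos_of_nonneg (hgV p hp hVp) (le_max_right _ _)

theorem isClassK_div_one_add_mul_penalizedInf (hK : IsCompact K) (hg : Continuous g)
    (hV : Continuous V) (hne : K.Nonempty) (hg0 : ∀ p ∈ K, 0 ≤ g p)
    (hgV : ∀ p ∈ K, 0 < V p → 0 < g p) :
    IsClassK fun s => s / (1 + s) * penalizedInf g V K s := by
  refine ⟨?_, fun s (hs : 0 ≤ s) t _ hst => ?_, by simp⟩
  · refine ContinuousOn.mul ?_ (continuous_penalizedInf hK hg hV).continuousOn
    exact continuousOn_id.div (by fun_prop) fun s (hs : 0 ≤ s) => by positivity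
  · have ht : 0 < t := hs.trans_lt hst
    have hdiv : s / (1 + s) < t / (1 + t) := by
      rw [div_lt_div_iff₀ (by positivity) (by positivity)]
      linarith
    calc s / (1 + s) * penalizedInf g V K s ≤ s / (1 + s) * penalizedInf g V K t :=
          mul_le_mul_of_nonneg_left (penalizedInf_mono hK hg hV hne hst.le) (by positivity)
      _ < t / (1 + t) * penalizedInf g V K t :=
          mul_lt_mul_of_pos_right hdiv (penalizedInf_pos hK hg hV hne hg0 hgV ht)

end PenalizedInf

section LyapunovNecessary

variable {E D : Type*} [NormedAddCommGroup E] [NormedAddCommGroup D] [ProperSpace D]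

theorem exists_isDecayRate_le [ProperSpace E] {V : E → ℝ} {g : E × D → ℝ} (hV : Continuous V)
    (hV0 : ∀ ξ, 0 ≤ V ξ) (hg : Continuous g) (hg0 : ∀ ξ v, ‖v‖ ≤ 1 → 0 ≤ g (ξ, v))
    (hgV : ∀ ξ v, ‖v‖ ≤ 1 → 0 < V ξ → 0 < g (ξ, v)) :
    ∃ α, IsDecayRate α ∧ ∀ ξ v, ‖v‖ ≤ 1 → α (V ξ) ‖ξ‖ ≤ g (ξ, v) := by
  let K : ℝ → Set (E × D) := fun r => Metric.closedBall 0 r ×ˢ Metric.closedBall 0 1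
  have hK (r : ℝ) : IsCompact (K r) := (isCompact_closedBall 0 r).prod (isCompact_closedBall 0 1)
  have hne {r : ℝ} (hr : 0 ≤ r) : (K r).Nonempty :=
    ⟨(0, 0), Metric.mem_closedBall_self hr, Metric.mem_closedBall_self zero_le_one⟩
  have hv {r : ℝ} {p : E × D} (hp : p ∈ K r) : ‖p.2‖ ≤ 1 := mem_closedBall_zero_iff.1 hp.2
  have hVfst : Continuous fun p : E × D => V p.1 := hV.comp continuous_fst
  refine ⟨fun s r => s / (1 + s) * penalizedInf g (fun p => V p.1) (K r) s,
    ⟨fun r hr => isClassK_div_one_add_mul_penalizedInf (hK r) hg hVfst (hne hr)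
      (fun p hp => hg0 _ _ (hv hp)) fun p hp => hgV _ _ (hv hp), ?_⟩, fun ξ v hv1 => ?_⟩
  · intro s hs r hr r' _ hrr'
    exact mul_le_mul_of_nonneg_left (penalizedInf_anti (hK r') hg hVfst (hne hr)
      (prod_mono_left (Metric.closedBall_subset_closedBall hrr'))) (by positivity)
  · have hmem : (ξ, v) ∈ K ‖ξ‖ := ⟨by simp, by simpa using hv1⟩
    have hle : penalizedInf g (fun p => V p.1) (K ‖ξ‖) (V ξ) ≤ g (ξ, v) := by
      simpa using penalizedInf_le (s := V ξ) (hK ‖ξ‖) hg hVfst hmem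
    have hdiv : V ξ / (1 + V ξ) ≤ 1 := by
      have := hV0 ξ
      rw [div_le_one (by positivity)]
      linarith
    calc V ξ / (1 + V ξ) * penalizedInf g (fun p => V p.1) (K ‖ξ‖) (V ξ)
        ≤ V ξ / (1 + V ξ) * g (ξ, v) :=
          mul_le_mul_of_nonneg_left hle (div_nonneg (hV0 ξ) (by linarith [hV0 ξ]))
      _ ≤ g (ξ, v) := mul_le_of_le_one_left (hg0 ξ v hv1) hdiv

variable [NormedSpace ℝ E] [FiniteDimensional ℝ E] [MeasurableSpace D] [BorelSpace D]
  {H : E × D → E} {o : E → ℝ} {β : ℝ → ℝ → ℝ} {ρ : ℝ → ℝ}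

namespace IsUniformlyOutputStable

theorem exists_contDiff_fderiv_neg (hest : IsUniformlyOutputStable H o β ρ)
    (hH : LocallyLipschitz H) (ho : LocallyLipschitz o) {ε : ℝ} (hε : 0 < ε) :
    ∃ W : E → ℝ, ContDiff ℝ (⊤ : ℕ∞) W ∧ W 0 ≤ ε ∧ (∀ ξ, o ξ - ε ≤ W ξ) ∧
      ∀ ξ v, ‖v‖ ≤ 1 → ε < W ξ → fderiv ℝ W ξ (H (ξ, v)) < 0 := by
  have hε2 : 0 < ε / 2 := half_pos hε
  obtain ⟨W, hW, hclose, hdecay⟩ :=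
    exists_contDiff_fderiv_le (hest.locallyLipschitz_valueFunction hε2 hH ho) hH
      (fun ξ v hv hd => hest.fderiv_valueFunction_le hε2 hH hd hv) hε2
  refine ⟨W, hW, ?_, fun ξ => ?_, fun ξ v hv hlt => ?_⟩
  · have h0 := le_of_abs_le (hclose 0)
    rw [hest.valueFunction_zero hε2] at h0
    linarith
  · linarith [neg_le_of_abs_le (hclose ξ), hest.sub_le_valueFunction hε2 ξ]
  · linarith [hdecay ξ v hv, le_of_abs_le (hclose ξ)]

theorem exists_isOutputLyapunov (hest : IsUniformlyOutputStable H o β ρ)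
    (hH : LocallyLipschitz H) (ho : LocallyLipschitz o) :
    ∃ V, IsOutputLyapunov H o V := by
  have : ProperSpace E := FiniteDimensional.proper ℝ E
  let ε : ℕ → ℝ := fun j => 1 / (j + 1)
  have hε (j : ℕ) : 0 < ε j := Nat.one_div_pos_of_nat
  choose W hW hW0 hWo hdecay using fun j => hest.exists_contDiff_fderiv_neg hH ho (hε j)
  have hWd (j : ℕ) (ξ : E) : DifferentiableAt ℝ (W j) ξ := (hW j).differentiable (by simp) ξ
  obtain ⟨c, hc, hVsum, hαsum⟩ := exists_pos_isSmoothSeries_and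
    (F := fun j ξ => smoothRamp (W j ξ - ε j)) (G := fun j s => smoothRamp (s - 2 * ε j))
    (fun j => contDiff_smoothRamp.comp ((hW j).sub contDiff_const))
    fun j => contDiff_smoothRamp.comp (contDiff_id.sub contDiff_const)
  let V : E → ℝ := fun ξ => ∑' j, c j * smoothRamp (W j ξ - ε j)
  have hV0 (ξ : E) : 0 ≤ V ξ := tsum_nonneg fun j => mul_nonneg (hc j).le (smoothRamp_nonneg _)
  have hVz : V 0 = 0 := by
    have hzero (j : ℕ) : smoothRamp (W j 0 - ε j) = 0 :=
      smoothRamp_of_nonpos (sub_nonpos.2 (hW0 j))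
    simp only [V, hzero, mul_zero, tsum_zero]
  have hα₁ : IsClassKInfty fun s => ∑' j, c j * smoothRamp (s - 2 * ε j) :=
    isClassKInfty_tsum_smoothRamp hc (fun j => by linarith [hε j])
      (by simpa [ε] using tendsto_one_div_add_atTop_nhds_zero_nat.const_mul (2 : ℝ)) hαsum
  have hle_V (ξ : E) : ∑' j, c j * smoothRamp (o ξ - 2 * ε j) ≤ V ξ :=
    (hαsum.summable _).tsum_le_tsum (fun j => mul_le_mul_of_nonneg_left
      (monotone_smoothRamp (by linarith [hWo j ξ])) (hc j).le) (hVsum.summable ξ)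
  obtain ⟨α₂, hα₂, hV_le⟩ := exists_isClassKInfty_ge_of_continuous hVsum.contDiff.continuous hVz
  have hrate : Continuous fun q => -fderiv ℝ V q.1 (H q) :=
    (((hVsum.contDiff.continuous_fderiv (by simp)).comp continuous_fst).clm_apply
      hH.continuous).neg
  obtain ⟨α, hα, hα_le⟩ := exists_isDecayRate_le hVsum.contDiff.continuous hV0 hrate
    (fun ξ v hv => neg_nonneg.2
      (fderiv_tsum_smoothRamp_nonpos hc hVsum (hWd · ξ) (hdecay · ξ v hv)))
    fun ξ v hv hpos => neg_pos.2
      (fderiv_tsum_smoothRamp_neg hc hVsum (hWd · ξ) (hdecay · ξ v hv) hpos)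
  exact ⟨V, hVsum.contDiff, hV0, ⟨_, α₂, hα₁, hα₂, fun ξ => ⟨hle_V ξ, hV_le ξ⟩⟩,
    α, hα, fun ξ v hv => le_neg_of_le_neg (hα_le ξ v hv)⟩

end IsUniformlyOutputStable

end LyapunovNecessary

theorem IsROS.exists_isROSLyapunov {n m p : ℕ}
    {f : EuclideanSpace ℝ (Fin n) → EuclideanSpace ℝ (Fin m) → EuclideanSpace ℝ (Fin n)}
    {h : EuclideanSpace ℝ (Fin n) → EuclideanSpace ℝ (Fin p)}
    {x : ℝ → EuclideanSpace ℝ (Fin n) → (ℝ → EuclideanSpace ℝ (Fin m)) → EuclideanSpace ℝ (Fin n)}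
    (hR : IsROS f h)
    (hf : LocallyLipschitz fun q : EuclideanSpace ℝ (Fin n) × EuclideanSpace ℝ (Fin m) =>
      f q.1 q.2) (hh : LocallyLipschitz h) (hB : IsBIBS f x) : ∃ V, IsROSLyapunov f h V := by
  obtain ⟨l, β, ρ, hl, hlip, hest⟩ := hR.exists_isUniformlyOutputStable hf hh.continuous hB
  obtain ⟨V, hV⟩ := hest.exists_isOutputLyapunov (locallyLipschitz_closedLoop hf hh hlip)
    (lipschitzWith_one_norm.locallyLipschitz.comp hh)
  exact ⟨V, hV.isROSLyapunov hl⟩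

/-- A BIBS system is ROS if and only if it admits an ROS-Lyapunov function. -/
theorem ros_iff_exists_rosLyapunov {n m p : ℕ}
    (f : EuclideanSpace ℝ (Fin n) → EuclideanSpace ℝ (Fin m) → EuclideanSpace ℝ (Fin n))
    (h : EuclideanSpace ℝ (Fin n) → EuclideanSpace ℝ (Fin p))
    (x : ℝ → EuclideanSpace ℝ (Fin n) → (ℝ → EuclideanSpace ℝ (Fin m)) →
      EuclideanSpace ℝ (Fin n))
    (hf : LocallyLipschitz fun q : EuclideanSpace ℝ (Fin n) × EuclideanSpace ℝ (Fin m) =>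
      f q.1 q.2)
    (hf0 : f 0 0 = 0)
    (hh : LocallyLipschitz h) (hh0 : h 0 = 0)
    (hBIBS : IsBIBS f x) :
    IsROS f h ↔ ∃ V : EuclideanSpace ℝ (Fin n) → ℝ, IsROSLyapunov f h V :=
  ⟨fun hR => hR.exists_isROSLyapunov hf hh hBIBS, fun ⟨_, hV⟩ => hV.isROS hf hh hBIBS⟩
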